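/- arXiv:1308.3024 — 3 statements merged into one kernel-verified Lean document; each statement's English description precedes it below -/
import Mathlib

section
/- Let p be a prime number and let k be a field whose absolute Galois group is a pro-p group. If X ⊂ P^n_k is a hypersurface of degree d ≤ n, then there exists a closed subscheme W ⊂ X which is geometrically irreducible over k. -/
/-!
Write `S = k[x₀,…,xₙ]`. The graded form of the following Euler characteristic argument is carried
out: a hypersurface of degree `d ≤ n` has `χ(𝒪_X) = 1`, whereas an integral scheme whose function
field contains a nontrivial finite separable extension `E/k` contributes only multiples of
`[E : k]`, hence of `p`, to Euler characteristics.

Suppose that no homogeneous prime `P ∋ f` other than the irrelevant ideal is geometrically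
irreducible. Noetherian induction (`finrank_gradedPart_modEq`) shows that every homogeneous ideal
`I ∋ f` satisfies `dim (S/I)_t ≡ 0` modulo `p` for large `t`:

* If `I` is not prime, there are `a, b ∉ I` with `a * b ∈ I` and `a` homogeneous. The Hilbert
  function of `S/I` is then the sum of those of `S/(I + (a))` and of a shift of `S/(I : a)`
  (`finrank_gradedPart_colon_sup`), and both ideals are strictly larger.
* If `I = P` is prime and not irrelevant, then `Frac (S/P)` contains an element separable over `k`
  and not in `k`. Passing to top-degree components gives a root `b` of its minimal polynomial which
  is a quotient of forms of equal degree (`exists_homogeneous_root`). Put `E = k(b)`, so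
  `p ∣ [E : k]`. The conductor `J/P` of `(S/P)[E]` in `S/P` is a nonzero homogeneous ideal whose
  graded pieces are `E`-vector spaces (`map_gradedPart_conductor`), so `S/P` and `S/J` have the same
  Hilbert function modulo `p`, and `J` is strictly larger than `P`.

For `I = (f)` this gives `C(t + n, n) ≡ C(t - d + n, n)` modulo `p` for large `t`. With `t = p ^ M`
the two sides are congruent to `C(n, n) = 1` and `C(n - d, n) = 0`, a contradiction.
-/

/-!
Let `p` be a prime and `k` a field whose absolute Galois group is a pro-`p` group
(equivalently: every finite separable extension of `k` has degree a power of `p`).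
If `X ⊆ ℙⁿ_k` is a hypersurface of degree `d ≤ n`, then `X` contains a closed subscheme
`W` which is geometrically irreducible over `k`.

A closed integral subscheme of `X` corresponds to a homogeneous prime ideal `𝔭` of
`k[x₀,…,xₙ]` containing `f` and strictly contained in the irrelevant ideal `(x₀,…,xₙ)`;
by EGA IV 4.5.9, `W = Proj (k[x₀,…,xₙ]/𝔭)` is geometrically irreducible over `k` if and
only if `k` is separably algebraically closed in the function field of the affine cone,
`Frac (k[x₀,…,xₙ]/𝔭)`.  (The existence of a geometrically irreducible closed subscheme is
equivalent to the existence of a geometrically irreducible integral one.)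
-/

attribute [local instance] MvPolynomial.gradedAlgebra

/-- `k` is separably algebraically closed in the `k`-algebra `L` (with structure map `φ`). -/
def SeparablyClosedIn (k L : Type) [Field k] [CommRing L] (φ : k →+* L) : Prop :=
  ∀ a : L, (∃ g : Polynomial k, g.Monic ∧ g.Separable ∧ Polynomial.eval₂ φ a g = 0) →
    ∃ b : k, φ b = a

namespace GeomIrred

open MvPolynomial

/-! ### Binomial coefficients modulo `p` -/

theorem choose_pow_add_modEq {p : ℕ} (hp : p.Prime) {M n : ℕ} (hn : n < p ^ M) (j : ℕ) :
    (p ^ M + j).choose n ≡ j.choose n [MOD p] := by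
  rw [Nat.add_choose_eq, Finset.Nat.sum_antidiagonal_eq_sum_range_succ_mk,
    Finset.sum_range_succ']
  have h0 : ∑ i ∈ Finset.range n, (p ^ M).choose (i + 1) * j.choose (n - (i + 1)) ≡ 0 [MOD p] := by
    rw [Nat.modEq_zero_iff_dvd]
    refine Finset.dvd_sum fun i hi => Dvd.dvd.mul_right (hp.dvd_choose_pow (by omega) ?_) _
    have := Finset.mem_range.mp hi
    omega
  simpa using h0.add_right (j.choose n)

/-! ### Homogeneous components as polynomial coefficients -/

section Theta

variable {k : Type} [Field k] {σ : Type}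

/-- The ring homomorphism `S → S[T]`, `Xᵢ ↦ Xᵢ T`, whose coefficients are the homogeneous
components. -/
noncomputable def theta : MvPolynomial σ k →ₐ[k] Polynomial (MvPolynomial σ k) :=
  aeval fun i => Polynomial.C (X i) * Polynomial.X

theorem theta_monomial (d : σ →₀ ℕ) (c : k) :
    theta (monomial d c) = Polynomial.C (monomial d c) * Polynomial.X ^ d.degree := by
  rw [theta, aeval_monomial, monomial_eq, Finsupp.degree]
  simp only [mul_pow, Finsupp.prod, Finset.prod_mul_distrib, Finset.prod_pow_eq_pow_sum, map_mul,
    map_prod, map_pow]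
  rw [← mul_assoc]
  rfl

theorem coeff_theta (s : MvPolynomial σ k) (i : ℕ) :
    (theta s).coeff i = homogeneousComponent i s := by
  induction s using MvPolynomial.induction_on' with
  | monomial d c =>
    rw [theta_monomial, Polynomial.coeff_C_mul, Polynomial.coeff_X_pow]
    rw [homogeneousComponent_of_mem (isHomogeneous_monomial c rfl)]
    split_ifs <;> simp
  | add p q hp hq => simp [hp, hq]

theorem theta_of_isHomogeneous {s : MvPolynomial σ k} {e : ℕ} (hs : s.IsHomogeneous e) :
    theta s = Polynomial.C s * Polynomial.X ^ e := by
  ext1 i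
  rw [coeff_theta, homogeneousComponent_of_mem hs, Polynomial.coeff_C_mul, Polynomial.coeff_X_pow]
  split_ifs <;> simp

theorem homogeneousComponent_mul_left {a : MvPolynomial σ k} {e : ℕ} (ha : a.IsHomogeneous e)
    (y : MvPolynomial σ k) (t : ℕ) :
    homogeneousComponent (e + t) (a * y) = a * homogeneousComponent t y := by
  rw [← coeff_theta, map_mul, theta_of_isHomogeneous ha, mul_assoc, Polynomial.coeff_C_mul,
    add_comm, Polynomial.coeff_X_pow_mul, coeff_theta]

end Theta

/-! ### Hilbert functions of homogeneous ideals -/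

section Hilbert

variable {k : Type} [Field k] {n : ℕ}

/-- The degree-`t` part of an ideal `I` of the polynomial ring, as a `k`-vector space. -/
noncomputable def gradedPart (I : Ideal (MvPolynomial (Fin (n + 1)) k)) (t : ℕ) :
    Submodule k (MvPolynomial (Fin (n + 1)) k) :=
  I.restrictScalars k ⊓ homogeneousSubmodule (Fin (n + 1)) k t

theorem mem_gradedPart {I : Ideal (MvPolynomial (Fin (n + 1)) k)} {t : ℕ}
    {x : MvPolynomial (Fin (n + 1)) k} :
    x ∈ gradedPart I t ↔ x ∈ I ∧ x.IsHomogeneous t := Iff.rfl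

instance (t : ℕ) : FiniteDimensional k (homogeneousSubmodule (Fin (n + 1)) k t) :=
  Module.Finite.iff_fg.mpr (homogeneousSubmodule_fg _ _ t)

instance (I : Ideal (MvPolynomial (Fin (n + 1)) k)) (t : ℕ) :
    FiniteDimensional k (gradedPart I t) :=
  Submodule.finiteDimensional_of_le (inf_le_right : gradedPart I t ≤ _)

theorem isHomogeneous_of_component {I : Ideal (MvPolynomial (Fin (n + 1)) k)}
    (h : ∀ s ∈ I, ∀ t, homogeneousComponent t s ∈ I) :
    I.IsHomogeneous (homogeneousSubmodule (Fin (n + 1)) k) := by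
  intro t s hs
  have : ((DirectSum.decompose (homogeneousSubmodule (Fin (n + 1)) k) s t :
      homogeneousSubmodule (Fin (n + 1)) k t) : MvPolynomial (Fin (n + 1)) k) =
      homogeneousComponent t s := decomposition.decompose'_apply s t
  rw [this]
  exact h s hs t

variable (k n) in
theorem finrank_homogeneousSubmodule (t : ℕ) :
    Module.finrank k (homogeneousSubmodule (Fin (n + 1)) k t) = (t + n).choose n := by
  have hset : {d : Fin (n + 1) →₀ ℕ | d.degree = t} =
      ((Finset.univ : Finset (Fin (n + 1))).finsuppAntidiag t : Set (Fin (n + 1) →₀ ℕ)) := by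
    ext d
    simp [Finset.mem_finsuppAntidiag, Finsupp.degree_eq_sum]
  rw [homogeneousSubmodule_eq_finsupp_supported, hset]
  have e := (AddMonoidAlgebra.supportedEquivFinsupp
    (R := k) (S := k) (M := Fin (n + 1) →₀ ℕ)
    ((Finset.univ : Finset (Fin (n + 1))).finsuppAntidiag t : Set (Fin (n + 1) →₀ ℕ)))
  rw [e.finrank_eq, Module.finrank_finsupp_self]
  simp [Finset.card_finsuppAntidiag_nat_eq_choose]
  rw [← Nat.choose_symm_add]
  congr 1
  omega

/-- Additivity of Hilbert functions along
`0 → (S/(I : a))(-e) → S/I → S/(I + (a)) → 0`, for `a` homogeneous of degree `e`. -/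
theorem finrank_gradedPart_colon_sup (I : Ideal (MvPolynomial (Fin (n + 1)) k))
    (hI : I.IsHomogeneous (homogeneousSubmodule (Fin (n + 1)) k))
    {a : MvPolynomial (Fin (n + 1)) k} {e : ℕ} (ha : a.IsHomogeneous e) (ha0 : a ≠ 0)
    (t : ℕ) :
    Module.finrank k (gradedPart (I ⊔ Ideal.span {a}) (e + t)) +
        Module.finrank k (gradedPart (I.colon {a}) t) =
      Module.finrank k (gradedPart I (e + t)) +
        Module.finrank k (homogeneousSubmodule (Fin (n + 1)) k t) := by
  let μ : MvPolynomial (Fin (n + 1)) k →ₗ[k] MvPolynomial (Fin (n + 1)) k := LinearMap.mulLeft k a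
  have hμ : Function.Injective μ := fun x y h => mul_left_cancel₀ ha0 h
  have hr (U : Submodule k (MvPolynomial (Fin (n + 1)) k)) :
      Module.finrank k (U.map μ) = Module.finrank k U :=
    (Submodule.equivMapOfInjective μ hμ U).finrank_eq.symm
  have hsup : gradedPart I (e + t) ⊔ (homogeneousSubmodule (Fin (n + 1)) k t).map μ =
      gradedPart (I ⊔ Ideal.span {a}) (e + t) := by
    apply le_antisymm
    · refine sup_le (fun x hx => ⟨Ideal.mem_sup_left hx.1, hx.2⟩) ?_
      rintro _ ⟨x, hx, rfl⟩
      exact ⟨Ideal.mem_sup_right (Ideal.mul_mem_right _ _ (Ideal.mem_span_singleton_self a)),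
        ha.mul hx⟩
    · rintro x ⟨hx, hxt⟩
      obtain ⟨y, hy, z, hz, rfl⟩ := Submodule.mem_sup.mp hx
      obtain ⟨w, rfl⟩ := Ideal.mem_span_singleton'.mp hz
      rw [← homogeneousComponent_eq_self hxt, map_add, mul_comm w a, homogeneousComponent_mul_left ha]
      exact Submodule.add_mem_sup
        ⟨homogeneousComponent_mem_of_mem hI hy _, homogeneousComponent_isHomogeneous _ _⟩
        ⟨_, homogeneousComponent_isHomogeneous _ _, rfl⟩
  have hinf : gradedPart I (e + t) ⊓ (homogeneousSubmodule (Fin (n + 1)) k t).map μ =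
      (gradedPart (I.colon {a}) t).map μ := by
    ext x
    constructor
    · rintro ⟨hx, y, hy, rfl⟩
      refine ⟨y, ⟨?_, hy⟩, rfl⟩
      exact Submodule.mem_colon_singleton.mpr (by simpa [μ, mul_comm] using hx.1)
    · rintro ⟨y, ⟨hy, hyt⟩, rfl⟩
      have := Submodule.mem_colon_singleton.mp hy
      exact ⟨⟨by simpa [μ, mul_comm] using this, ha.mul hyt⟩, y, hyt, rfl⟩
  have := Submodule.finrank_sup_add_finrank_inf_eq (gradedPart I (e + t))
    ((homogeneousSubmodule (Fin (n + 1)) k t).map μ)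
  rwa [hsup, hinf, hr, hr] at this

end Hilbert


/-! ### Algebraic elements in the fraction field of a graded domain -/

section Fractions

variable {k F : Type} [Field k] [Field F] [Algebra k F] {n : ℕ}

theorem sum_homogenized_eq (g : Polynomial k) (u v : F) (hv : v ≠ 0) :
    ∑ i ∈ Finset.range (g.natDegree + 1),
        algebraMap k F (g.coeff i) * u ^ i * v ^ (g.natDegree - i) =
      v ^ g.natDegree * Polynomial.aeval (u / v) g := by
  rw [Polynomial.aeval_eq_sum_range, Finset.mul_sum]
  refine Finset.sum_congr rfl fun i hi => ?_
  have hi' : i ≤ g.natDegree := Nat.lt_succ_iff.mp (Finset.mem_range.mp hi)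
  rw [Algebra.smul_def, div_pow]
  nth_rewrite 2 [← Nat.sub_add_cancel hi']
  rw [pow_add]
  field_simp

/-- A root `ι y / ι x` of a monic polynomial over `k` may be replaced by one that is a quotient of
homogeneous elements of equal degree: the quotient of the components of `y` and `x` in the largest
degree in which one of them is nonzero. -/
theorem exists_homogeneous_root (ι : MvPolynomial (Fin (n + 1)) k →ₐ[k] F)
    (hker : (RingHom.ker ι).IsHomogeneous (homogeneousSubmodule (Fin (n + 1)) k))
    (g : Polynomial k) (hg : g.Monic) (x y : MvPolynomial (Fin (n + 1)) k) (hx : ι x ≠ 0)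
    (hroot : Polynomial.aeval (ι y / ι x) g = 0) :
    ∃ (N : ℕ) (u v : MvPolynomial (Fin (n + 1)) k), u.IsHomogeneous N ∧ v.IsHomogeneous N ∧
      ι v ≠ 0 ∧ Polynomial.aeval (ι u / ι v) g = 0 := by
  let Θ : MvPolynomial (Fin (n + 1)) k →+* Polynomial F :=
    (Polynomial.mapRingHom (ι : MvPolynomial (Fin (n + 1)) k →+* F)).comp
      (theta (k := k) (σ := Fin (n + 1)) : _ →+* _)
  have hΘ (s : MvPolynomial (Fin (n + 1)) k) (i : ℕ) :
      (Θ s).coeff i = ι (homogeneousComponent i s) := by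
    simp [Θ, coeff_theta]
  have hΘ0 (s : MvPolynomial (Fin (n + 1)) k) (hs : ι s = 0) : Θ s = 0 := by
    ext i
    rw [hΘ]
    exact homogeneousComponent_mem_of_mem hker hs i
  have hΘC (c : k) : Θ (C c) = Polynomial.C (algebraMap k F c) := by
    simp [Θ, theta, algebraMap_eq]
  have hΘx : Θ x ≠ 0 := by
    intro h
    apply hx
    have : x ∈ RingHom.ker ι := by
      rw [mem_iff_homogeneousComponent_mem hker]
      intro i
      change ι _ = 0
      rw [← hΘ, h, Polynomial.coeff_zero]
    exact this
  set N := max (Θ x).natDegree (Θ y).natDegree with hN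
  have hxN : (Θ x).natDegree ≤ N := le_max_left _ _
  have hyN : (Θ y).natDegree ≤ N := le_max_right _ _
  let R : MvPolynomial (Fin (n + 1)) k := ∑ i ∈ Finset.range (g.natDegree + 1),
    C (g.coeff i) * y ^ i * x ^ (g.natDegree - i)
  have hιR : ι R = 0 := by
    have := sum_homogenized_eq g (ι y) (ι x) hx
    rw [hroot, mul_zero] at this
    rw [← this]
    simp [R, ← algebraMap_eq]
  -- the coefficient of `T ^ (N * deg g)` in `Θ R = 0`
  have hcoeff : ∑ i ∈ Finset.range (g.natDegree + 1),
      algebraMap k F (g.coeff i) * (Θ y).coeff N ^ i * (Θ x).coeff N ^ (g.natDegree - i) = 0 := by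
    have h0 : (Θ R).coeff (g.natDegree * N) = 0 := by rw [hΘ0 R hιR, Polynomial.coeff_zero]
    rw [← h0]
    simp only [R, map_sum, Polynomial.finsetSum_coeff]
    refine Finset.sum_congr rfl fun i hi => ?_
    have hi' : i ≤ g.natDegree := Nat.lt_succ_iff.mp (Finset.mem_range.mp hi)
    have hdeg : g.natDegree * N = i * N + (g.natDegree - i) * N := by
      rw [← add_mul, Nat.add_sub_cancel' hi']
    rw [map_mul, map_mul, map_pow, map_pow, hΘC, mul_assoc (Polynomial.C _), Polynomial.coeff_C_mul,
      hdeg, Polynomial.coeff_mul_add_eq_of_natDegree_le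
        (Polynomial.natDegree_pow_le_of_le i hyN)
        (Polynomial.natDegree_pow_le_of_le _ hxN),
      Polynomial.coeff_pow_of_natDegree_le hyN, Polynomial.coeff_pow_of_natDegree_le hxN, mul_assoc]
  have hv : (Θ x).coeff N ≠ 0 := by
    intro hv
    have hy0 : (Θ y).coeff N = 0 := by
      rw [Finset.sum_range_succ, Finset.sum_eq_zero, hv] at hcoeff
      · have : (Θ y).coeff N = 0 ∧ ¬g.natDegree = 0 := by
          simpa [hg.coeff_natDegree] using hcoeff
        exact this.1
      · intro i hi
        have := Finset.mem_range.mp hi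
        rw [hv, zero_pow (by omega), mul_zero]
    rcases max_choice (Θ x).natDegree (Θ y).natDegree with h | h
    · rw [hN, h] at hv
      exact hΘx (Polynomial.leadingCoeff_eq_zero.mp hv)
    · rw [hN, h] at hy0
      have hy00 : Θ y = 0 := Polynomial.leadingCoeff_eq_zero.mp hy0
      have hx00 : (Θ x).natDegree = 0 := by
        have : (Θ x).natDegree ≤ (Θ y).natDegree := h ▸ le_max_left _ _
        simpa [hy00] using this
      rw [hN, h, hy00, Polynomial.natDegree_zero, ← hx00] at hv
      exact hΘx (Polynomial.leadingCoeff_eq_zero.mp hv)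
  refine ⟨N, homogeneousComponent N y, homogeneousComponent N x,
    homogeneousComponent_isHomogeneous _ _, homogeneousComponent_isHomogeneous _ _, ?_, ?_⟩
  · rwa [← hΘ]
  · rw [← hΘ, ← hΘ]
    have := sum_homogenized_eq g ((Θ y).coeff N) ((Θ x).coeff N) hv
    rw [hcoeff] at this
    exact (mul_eq_zero.mp this.symm).resolve_left (pow_ne_zero _ hv)

/-- `e : F` is a quotient of homogeneous elements of the same degree. -/
def IsDegreeZero (ι : MvPolynomial (Fin (n + 1)) k →ₐ[k] F) (e : F) : Prop :=
  ∃ (N : ℕ) (u v : MvPolynomial (Fin (n + 1)) k), u.IsHomogeneous N ∧ v.IsHomogeneous N ∧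
    ι v ≠ 0 ∧ e * ι v = ι u

theorem isDegreeZero_of_mem_adjoin (ι : MvPolynomial (Fin (n + 1)) k →ₐ[k] F) {b : F}
    (hb : IsDegreeZero ι b) {e : F} (he : e ∈ IntermediateField.adjoin k {b}) :
    IsDegreeZero ι e := by
  induction he using IntermediateField.adjoin_induction with
  | mem x hx =>
    rw [Set.mem_singleton_iff.mp hx]
    exact hb
  | algebraMap c =>
    exact ⟨0, C c, 1, isHomogeneous_C _ _, isHomogeneous_one _ _, by simp,
      by simp [← algebraMap_eq]⟩
  | add x y _ _ hx hy =>
    obtain ⟨N, u, v, hu, hv, hv0, h⟩ := hx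
    obtain ⟨N', u', v', hu', hv', hv0', h'⟩ := hy
    refine ⟨N + N', u * v' + v * u', v * v', (hu.mul hv').add (hv.mul hu'), hv.mul hv',
      by simp [hv0, hv0'], ?_⟩
    simp only [map_add, map_mul, ← h, ← h']
    ring
  | inv x _ hx =>
    by_cases hx0 : x = 0
    · exact ⟨0, 0, 1, isHomogeneous_zero _ _ _, isHomogeneous_one _ _, by simp, by simp [hx0]⟩
    obtain ⟨N, u, v, hu, hv, hv0, h⟩ := hx
    exact ⟨N, v, u, hv, hu, by rw [← h]; exact mul_ne_zero hx0 hv0,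
      by rw [← h, inv_mul_cancel_left₀ hx0]⟩
  | mul x y _ _ hx hy =>
    obtain ⟨N, u, v, hu, hv, hv0, h⟩ := hx
    obtain ⟨N', u', v', hu', hv', hv0', h'⟩ := hy
    refine ⟨N + N', u * u', v * v', hu.mul hu', hv.mul hv', by simp [hv0, hv0'], ?_⟩
    simp only [map_mul, ← h, ← h']
    ring

/-- Multiplication by a fraction of degree zero preserves homogeneous components. -/
theorem IsDegreeZero.mul_component {ι : MvPolynomial (Fin (n + 1)) k →ₐ[k] F}
    (hker : (RingHom.ker ι).IsHomogeneous (homogeneousSubmodule (Fin (n + 1)) k))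
    {e : F} (he : IsDegreeZero ι e) {s y : MvPolynomial (Fin (n + 1)) k} (h : e * ι s = ι y)
    (t : ℕ) : e * ι (homogeneousComponent t s) = ι (homogeneousComponent t y) := by
  obtain ⟨N, u, v, hu, hv, hv0, huv⟩ := he
  have h1 : u * s - v * y ∈ RingHom.ker ι := by
    rw [RingHom.mem_ker, map_sub, map_mul, map_mul, ← huv, ← h]
    ring
  have h2 := homogeneousComponent_mem_of_mem hker h1 (N + t)
  rw [map_sub, homogeneousComponent_mul_left hu, homogeneousComponent_mul_left hv,
    RingHom.mem_ker, map_sub, map_mul, map_mul, ← huv] at h2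
  apply mul_left_cancel₀ hv0
  linear_combination h2

/-! ### The conductor -/

/-- The conductor of `S[E]` in `S`: the elements `s` with `E · ι s ⊆ ι S`. -/
def conductor (ι : MvPolynomial (Fin (n + 1)) k →ₐ[k] F) (E : IntermediateField k F) :
    Ideal (MvPolynomial (Fin (n + 1)) k) where
  carrier := {s | ∀ e ∈ E, e * ι s ∈ ι.range}
  zero_mem' e _ := by simp
  add_mem' {a b} ha hb e he := by
    rw [map_add, mul_add]
    exact add_mem (ha e he) (hb e he)
  smul_mem' c x hx e he := by
    rw [smul_eq_mul, map_mul, mul_left_comm]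
    exact mul_mem ⟨c, rfl⟩ (hx e he)

/-- The degree-`t` part of the image of the conductor. It is stable under `E`, which is what makes
its dimension over `k` divisible by `[E : k]`. -/
def conductorPart (ι : MvPolynomial (Fin (n + 1)) k →ₐ[k] F) (E : IntermediateField k F) (t : ℕ) :
    Submodule E F where
  carrier := {x | ∀ e ∈ E, e * x ∈ (homogeneousSubmodule (Fin (n + 1)) k t).map ι.toLinearMap}
  zero_mem' e _ := by simp
  add_mem' {a b} ha hb e he := by
    rw [mul_add]
    exact add_mem (ha e he) (hb e he)
  smul_mem' c x hx e he := by
    rw [Algebra.smul_def, ← mul_assoc]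
    exact hx _ (mul_mem he c.2)

theorem conductor_isHomogeneous {ι : MvPolynomial (Fin (n + 1)) k →ₐ[k] F}
    (hker : (RingHom.ker ι).IsHomogeneous (homogeneousSubmodule (Fin (n + 1)) k))
    {E : IntermediateField k F} (hE : ∀ e ∈ E, IsDegreeZero ι e) :
    (conductor ι E).IsHomogeneous (homogeneousSubmodule (Fin (n + 1)) k) := by
  refine isHomogeneous_of_component fun s hs t => ?_
  intro e he
  obtain ⟨y, hy⟩ := hs e he
  exact ⟨_, ((hE e he).mul_component hker hy.symm t).symm⟩

theorem map_gradedPart_conductor {ι : MvPolynomial (Fin (n + 1)) k →ₐ[k] F}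
    (hker : (RingHom.ker ι).IsHomogeneous (homogeneousSubmodule (Fin (n + 1)) k))
    {E : IntermediateField k F} (hE : ∀ e ∈ E, IsDegreeZero ι e) (t : ℕ) :
    (gradedPart (conductor ι E) t).map ι.toLinearMap = (conductorPart ι E t).restrictScalars k := by
  ext x
  constructor
  · rintro ⟨s, ⟨hs, hst⟩, rfl⟩ e he
    obtain ⟨y, hy⟩ := hs e he
    refine ⟨homogeneousComponent t y, homogeneousComponent_isHomogeneous _ _, ?_⟩
    have := (hE e he).mul_component hker hy.symm t
    rw [homogeneousComponent_eq_self hst] at this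
    exact this.symm
  · intro hx
    obtain ⟨s, hs, hsx⟩ := hx 1 (one_mem E)
    rw [one_mul] at hsx
    refine ⟨s, ⟨fun e he => ?_, hs⟩, hsx⟩
    obtain ⟨y, -, hy⟩ := hx e he
    exact ⟨y, by rw [← hsx] at hy; exact hy⟩

theorem ker_le_conductor (ι : MvPolynomial (Fin (n + 1)) k →ₐ[k] F) (E : IntermediateField k F) :
    RingHom.ker ι ≤ conductor ι E := by
  intro s hs e _
  rw [RingHom.mem_ker.mp hs, mul_zero]
  exact zero_mem _

theorem ker_lt_conductor {ι : MvPolynomial (Fin (n + 1)) k →ₐ[k] F}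
    {E : IntermediateField k F} [FiniteDimensional k E] (hE : ∀ e ∈ E, IsDegreeZero ι e) :
    RingHom.ker ι < conductor ι E := by
  refine lt_of_le_of_ne (ker_le_conductor ι E) fun heq => ?_
  -- a common denominator of a basis of `E` lies in the conductor but not in the kernel
  let B := Module.finBasis k E
  choose N u v hu hv hv0 huv using fun i => hE (B i : F) (B i).2
  have hmem : ∏ i, v i ∈ conductor ι E := by
    intro e he
    have hsum : e = ∑ i, B.repr ⟨e, he⟩ i • (B i : F) := by
      have := congrArg E.val (B.sum_repr ⟨e, he⟩)
      rw [map_sum] at this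
      exact this.symm
    rw [hsum, Finset.sum_mul]
    refine sum_mem fun i _ => ?_
    rw [smul_mul_assoc]
    refine Subalgebra.smul_mem _ ?_ _
    rw [← Finset.mul_prod_erase Finset.univ v (Finset.mem_univ i), map_mul, ← mul_assoc, huv]
    exact mul_mem ⟨_, rfl⟩ ⟨_, rfl⟩
  rw [← heq, RingHom.mem_ker, map_prod] at hmem
  exact Finset.prod_ne_zero_iff.mpr (fun i _ => hv0 i) hmem

theorem finrank_conductor_modEq {ι : MvPolynomial (Fin (n + 1)) k →ₐ[k] F}
    (hker : (RingHom.ker ι).IsHomogeneous (homogeneousSubmodule (Fin (n + 1)) k))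
    {E : IntermediateField k F} (hE : ∀ e ∈ E, IsDegreeZero ι e)
    {p : ℕ} (hp : p ∣ Module.finrank k E) (t : ℕ) :
    Module.finrank k (gradedPart (conductor ι E) t) ≡
      Module.finrank k (gradedPart (RingHom.ker ι) t) [MOD p] := by
  have hdvd : p ∣ Module.finrank k ((gradedPart (conductor ι E) t).map ι.toLinearMap) := by
    rw [map_gradedPart_conductor hker hE]
    change p ∣ Module.finrank k (conductorPart ι E t)
    rw [← Module.finrank_mul_finrank k E]
    exact hp.mul_right _
  let φ := ι.toLinearMap.domRestrict (gradedPart (conductor ι E) t)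
  have h1 := φ.finrank_range_add_finrank_ker
  have h2 : φ.range = (gradedPart (conductor ι E) t).map ι.toLinearMap :=
    LinearMap.range_domRestrict _ _
  have h3 : Module.finrank k φ.ker = Module.finrank k (gradedPart (RingHom.ker ι) t) := by
    rw [(Submodule.equivMapOfInjective (gradedPart (conductor ι E) t).subtype
      (Submodule.injective_subtype _) φ.ker).finrank_eq]
    suffices h : φ.ker.map (gradedPart (conductor ι E) t).subtype =
        gradedPart (RingHom.ker ι) t by rw [h]
    ext x
    constructor
    · rintro ⟨y, hy, rfl⟩
      exact ⟨hy, y.2.2⟩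
    · rintro ⟨hx, hxt⟩
      exact ⟨⟨x, ker_le_conductor ι E hx, hxt⟩, hx, rfl⟩
  rw [h2, h3] at h1
  rw [← h1]
  exact ((Nat.modEq_zero_iff_dvd.mpr hdvd).add_right _).trans (by rw [zero_add])

end Fractions

/-! ### Noetherian induction on homogeneous ideals -/

section Induction

variable {k : Type} [Field k] {n : ℕ}

/-- A homogeneous prime `P` which is not geometrically irreducible has the same Hilbert function
modulo `p` as a strictly larger homogeneous ideal, namely the conductor of `(S/P)[E]` in `S/P` for
a nontrivial finite separable extension `E` of `k` inside the fraction field of `S/P`. -/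
theorem exists_larger_of_not_separablyClosedIn
    {p : ℕ} (hGalProP : ∀ (L : Type) [Field L] [Algebra k L], FiniteDimensional k L →
      Algebra.IsSeparable k L → ∃ m : ℕ, Module.finrank k L = p ^ m)
    (P : Ideal (MvPolynomial (Fin (n + 1)) k)) [P.IsPrime]
    (hP : P.IsHomogeneous (homogeneousSubmodule (Fin (n + 1)) k))
    (hsep : ¬ SeparablyClosedIn k (FractionRing (MvPolynomial (Fin (n + 1)) k ⧸ P))
        ((algebraMap (MvPolynomial (Fin (n + 1)) k ⧸ P)
            (FractionRing (MvPolynomial (Fin (n + 1)) k ⧸ P))).comp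
          ((Ideal.Quotient.mk P).comp
            (algebraMap k (MvPolynomial (Fin (n + 1)) k))))) :
    ∃ J : Ideal (MvPolynomial (Fin (n + 1)) k),
      J.IsHomogeneous (homogeneousSubmodule (Fin (n + 1)) k) ∧ P < J ∧
      ∀ t, Module.finrank k (gradedPart J t) ≡ Module.finrank k (gradedPart P t) [MOD p] := by
  let A := MvPolynomial (Fin (n + 1)) k ⧸ P
  let F := FractionRing A
  let ι : MvPolynomial (Fin (n + 1)) k →ₐ[k] F :=
    (IsScalarTower.toAlgHom k A F).comp (Ideal.Quotient.mkₐ k P)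
  have hιker : RingHom.ker ι = P := by
    ext s
    rw [RingHom.mem_ker, ← Ideal.Quotient.eq_zero_iff_mem]
    exact IsFractionRing.to_map_eq_zero_iff (R := A) (K := F)
  have hker : (RingHom.ker ι).IsHomogeneous (homogeneousSubmodule (Fin (n + 1)) k) := by
    rwa [hιker]
  have hφ : (algebraMap A F).comp ((Ideal.Quotient.mk P).comp
      (algebraMap k (MvPolynomial (Fin (n + 1)) k))) = algebraMap k F := by
    ext c
    exact ι.commutes c
  unfold SeparablyClosedIn at hsep
  push Not at hsep
  obtain ⟨a, ⟨g, hgm, hgs, hga⟩, ha⟩ := hsep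
  change Polynomial.eval₂ ((algebraMap A F).comp ((Ideal.Quotient.mk P).comp
      (algebraMap k (MvPolynomial (Fin (n + 1)) k)))) a g = 0 at hga
  replace ha : ∀ c : k, algebraMap k F c ≠ a := fun c hc => ha c ((DFunLike.congr_fun hφ c).trans hc)
  rw [hφ] at hga
  have haint : IsIntegral k a := ⟨g, hgm, hga⟩
  have hasep : IsSeparable k a := hgs.of_dvd (minpoly.dvd k a hga)
  have : FiniteDimensional k (IntermediateField.adjoin k {a}) :=
    IntermediateField.adjoin.finiteDimensional haint
  have hLsep : Algebra.IsSeparable k (IntermediateField.adjoin k {a}) :=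
    (IntermediateField.isSeparable_adjoin_simple_iff_isSeparable k F).mpr hasep
  obtain ⟨m, hm⟩ := hGalProP (IntermediateField.adjoin k {a}) inferInstance hLsep
  have hm0 : m ≠ 0 := by
    rintro rfl
    rw [pow_zero, IntermediateField.finrank_adjoin_simple_eq_one_iff,
      IntermediateField.mem_bot] at hm
    obtain ⟨c, hc⟩ := hm
    exact ha c hc
  have hdeg : p ∣ (minpoly k a).natDegree := by
    rw [← IntermediateField.adjoin.finrank haint, hm]
    exact dvd_pow_self p hm0
  obtain ⟨y', x', hx', hxy⟩ := IsFractionRing.div_surjective (A := A) a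
  obtain ⟨x, rfl⟩ := Ideal.Quotient.mk_surjective x'
  obtain ⟨y, rfl⟩ := Ideal.Quotient.mk_surjective y'
  have hx0 : ι x ≠ 0 := by
    intro h
    exact nonZeroDivisors.ne_zero hx' ((IsFractionRing.to_map_eq_zero_iff (R := A) (K := F)).mp h)
  obtain ⟨N, u, v, hu, hv, hv0, hroot⟩ := exists_homogeneous_root ι hker (minpoly k a)
    (minpoly.monic haint) x y hx0 (by
      have : ι y / ι x = a := hxy
      rw [this]
      exact minpoly.aeval k a)
  have hmin : minpoly k a = minpoly k (ι u / ι v) :=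
    minpoly.eq_of_irreducible_of_monic (minpoly.irreducible haint) hroot (minpoly.monic haint)
  have hbint : IsIntegral k (ι u / ι v) := ⟨_, minpoly.monic haint, hroot⟩
  let E := IntermediateField.adjoin k {ι u / ι v}
  have : FiniteDimensional k E := IntermediateField.adjoin.finiteDimensional hbint
  have hE : ∀ e ∈ E, IsDegreeZero ι e := fun e he =>
    isDegreeZero_of_mem_adjoin ι ⟨N, u, v, hu, hv, hv0, div_mul_cancel₀ _ hv0⟩ he
  have hpE : p ∣ Module.finrank k E := by
    rw [IntermediateField.adjoin.finrank hbint, ← hmin]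
    exact hdeg
  refine ⟨conductor ι E, conductor_isHomogeneous hker hE, ?_, fun t => ?_⟩
  · have := ker_lt_conductor hE
    rwa [hιker] at this
  · have := finrank_conductor_modEq hker hE hpE t
    rwa [hιker] at this

theorem le_span_X_of_isHomogeneous {P : Ideal (MvPolynomial (Fin (n + 1)) k)} (hne : P ≠ ⊤)
    (hP : P.IsHomogeneous (homogeneousSubmodule (Fin (n + 1)) k)) :
    P ≤ Ideal.span (Set.range (X : Fin (n + 1) → MvPolynomial (Fin (n + 1)) k)) := by
  intro s hs
  have h0 := homogeneousComponent_mem_of_mem hP hs 0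
  rw [homogeneousComponent_zero] at h0
  have hc : coeff 0 s = 0 := by
    by_contra hc
    exact hne (Ideal.eq_top_of_isUnit_mem _ h0 ((IsUnit.mk0 _ hc).map C))
  rw [← Set.image_univ, mem_ideal_span_X_image]
  intro m hm
  by_contra! h
  have : m = 0 := by
    ext i
    simpa using h i
  rw [this, mem_support_iff] at hm
  exact hm hc

theorem mem_span_X_of_isHomogeneous {s : MvPolynomial (Fin (n + 1)) k} {t : ℕ} (ht : 1 ≤ t)
    (hs : s.IsHomogeneous t) :
    s ∈ Ideal.span (Set.range (X : Fin (n + 1) → MvPolynomial (Fin (n + 1)) k)) := by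
  rw [← Set.image_univ, mem_ideal_span_X_image]
  intro m hm
  by_contra! h
  have : m = 0 := by
    ext i
    simpa using h i
  rw [this, mem_support_iff] at hm
  exact hm (hs.coeff_eq_zero (by simp; omega))

/-- If no homogeneous prime containing `f` is geometrically irreducible, then every homogeneous
ideal `I` containing `f` has `dim (S/I)_t ≡ 0` modulo `p` for large `t`. -/
theorem finrank_gradedPart_modEq
    {p : ℕ} (hGalProP : ∀ (L : Type) [Field L] [Algebra k L], FiniteDimensional k L →
      Algebra.IsSeparable k L → ∃ m : ℕ, Module.finrank k L = p ^ m)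
    (f : MvPolynomial (Fin (n + 1)) k)
    (hno : ∀ (P : Ideal (MvPolynomial (Fin (n + 1)) k)) (_ : P.IsPrime),
      P.IsHomogeneous (homogeneousSubmodule (Fin (n + 1)) k) → f ∈ P →
      P < Ideal.span (Set.range (X : Fin (n + 1) → MvPolynomial (Fin (n + 1)) k)) →
      ¬ SeparablyClosedIn k (FractionRing (MvPolynomial (Fin (n + 1)) k ⧸ P))
        ((algebraMap (MvPolynomial (Fin (n + 1)) k ⧸ P)
            (FractionRing (MvPolynomial (Fin (n + 1)) k ⧸ P))).comp
          ((Ideal.Quotient.mk P).comp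
            (algebraMap k (MvPolynomial (Fin (n + 1)) k)))))
    (I : Ideal (MvPolynomial (Fin (n + 1)) k)) :
    I.IsHomogeneous (homogeneousSubmodule (Fin (n + 1)) k) → f ∈ I →
    ∃ T, ∀ t ≥ T, Module.finrank k (gradedPart I t) ≡
      Module.finrank k (homogeneousSubmodule (Fin (n + 1)) k t) [MOD p] := by
  induction I using WellFoundedGT.induction with
  | ind I ih =>
  intro hI hfI
  -- an ideal containing all forms of degree `t`
  have hfull : ∀ t, (∀ s : MvPolynomial (Fin (n + 1)) k, s.IsHomogeneous t → s ∈ I) →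
      gradedPart I t = homogeneousSubmodule (Fin (n + 1)) k t := fun t h =>
    le_antisymm inf_le_right fun s hs => ⟨h s hs, hs⟩
  by_cases htop : I = ⊤
  · refine ⟨0, fun t _ => ?_⟩
    rw [hfull t fun s _ => htop ▸ Submodule.mem_top]
  by_cases hprime : I.IsPrime
  · rcases (le_span_X_of_isHomogeneous htop hI).eq_or_lt with heq | hlt
    · refine ⟨1, fun t ht => ?_⟩
      rw [hfull t fun s hs => heq ▸ mem_span_X_of_isHomogeneous ht hs]
    · obtain ⟨J, hJ, hIJ, hmod⟩ :=
        exists_larger_of_not_separablyClosedIn hGalProP I hI (hno I hprime hI hfI hlt)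
      obtain ⟨T, hT⟩ := ih J hIJ hJ (hIJ.le hfI)
      exact ⟨T, fun t ht => (hmod t).symm.trans (hT t ht)⟩
  · obtain ⟨a, b, ⟨e, ha⟩, hab, haI, hbI⟩ : ∃ a b : MvPolynomial (Fin (n + 1)) k,
        (∃ e, a.IsHomogeneous e) ∧ a * b ∈ I ∧ a ∉ I ∧ b ∉ I := by
      by_contra! h
      refine hprime (hI.isPrime_of_homogeneous_mem_or_mem htop fun {x y} hx _ hxy => ?_)
      by_contra! hxy'
      exact hxy'.2 (h x y hx hxy hxy'.1)
    have ha0 : a ≠ 0 := fun h => haI (h ▸ zero_mem I)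
    have hsup : I < I ⊔ Ideal.span {a} := lt_of_le_of_ne le_sup_left fun h =>
      haI (h ▸ Ideal.mem_sup_right (Ideal.mem_span_singleton_self a))
    have hmemcolon (s : MvPolynomial (Fin (n + 1)) k) : s ∈ I.colon {a} ↔ a * s ∈ I := by
      rw [Submodule.mem_colon_singleton, smul_eq_mul, mul_comm]
    have hcolon_le : I ≤ I.colon {a} := fun s hs => (hmemcolon s).mpr (I.mul_mem_left _ hs)
    have hcolon : I < I.colon {a} := lt_of_le_of_ne hcolon_le fun h =>
      hbI (h ▸ (hmemcolon b).mpr hab)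
    have hsuph : (I ⊔ Ideal.span {a}).IsHomogeneous (homogeneousSubmodule (Fin (n + 1)) k) :=
      hI.sup (Ideal.homogeneous_span _ _ (by
        rintro _ rfl
        exact ⟨e, ha⟩))
    have hcolonh : (I.colon {a}).IsHomogeneous (homogeneousSubmodule (Fin (n + 1)) k) := by
      refine isHomogeneous_of_component fun s hs t => ?_
      rw [hmemcolon, ← homogeneousComponent_mul_left ha]
      exact homogeneousComponent_mem_of_mem hI ((hmemcolon s).mp hs) _
    obtain ⟨T₁, h₁⟩ := ih _ hsup hsuph (hsup.le hfI)
    obtain ⟨T₂, h₂⟩ := ih _ hcolon hcolonh (hcolon.le hfI)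
    refine ⟨e + T₁ + T₂, fun t ht => ?_⟩
    obtain ⟨r, rfl⟩ : ∃ r, t = e + r := ⟨t - e, by omega⟩
    have key := finrank_gradedPart_colon_sup I hI ha ha0 r
    have h₁' := h₁ (e + r) (by omega)
    have h₂' := h₂ r (by omega)
    have := (h₁'.add h₂').symm
    rw [key] at this
    exact (Nat.ModEq.add_right_cancel' _ this).symm

end Induction

end GeomIrred

theorem hypersurface_contains_geometrically_irreducible_closed_subscheme
    (p : ℕ) (hp : p.Prime) (k : Type) [Field k]
    (hGalProP : ∀ (L : Type) [Field L] [Algebra k L], FiniteDimensional k L →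
      Algebra.IsSeparable k L → ∃ m : ℕ, Module.finrank k L = p ^ m)
    (n d : ℕ) (hn : 1 ≤ n) (hd1 : 1 ≤ d) (hdn : d ≤ n)
    (f : MvPolynomial (Fin (n + 1)) k) (hf : f ≠ 0)
    (hhom : f.IsHomogeneous d) :
    ∃ 𝔭 : Ideal (MvPolynomial (Fin (n + 1)) k), ∃ _ : 𝔭.IsPrime,
      Ideal.IsHomogeneous (MvPolynomial.homogeneousSubmodule (Fin (n + 1)) k) 𝔭 ∧
      f ∈ 𝔭 ∧
      𝔭 < Ideal.span (Set.range (MvPolynomial.X : Fin (n + 1) → MvPolynomial (Fin (n + 1)) k)) ∧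
      SeparablyClosedIn k (FractionRing (MvPolynomial (Fin (n + 1)) k ⧸ 𝔭))
        ((algebraMap (MvPolynomial (Fin (n + 1)) k ⧸ 𝔭)
            (FractionRing (MvPolynomial (Fin (n + 1)) k ⧸ 𝔭))).comp
          ((Ideal.Quotient.mk 𝔭).comp
            (algebraMap k (MvPolynomial (Fin (n + 1)) k)))) := by
  by_contra hcon
  push Not at hcon
  obtain ⟨T, hT⟩ := GeomIrred.finrank_gradedPart_modEq hGalProP f hcon (Ideal.span {f})
    (Ideal.homogeneous_span _ _ (by
      rintro _ rfl
      exact ⟨d, hhom⟩)) (Ideal.mem_span_singleton_self f)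
  -- `dim (f)_{d + t} = dim S_t`
  have hprinc (t : ℕ) : Module.finrank k (GeomIrred.gradedPart (Ideal.span {f}) (d + t)) =
      Module.finrank k (MvPolynomial.homogeneousSubmodule (Fin (n + 1)) k t) := by
    have h := GeomIrred.finrank_gradedPart_colon_sup ⊥ (Ideal.IsHomogeneous.bot _) hhom hf t
    have h1 : (⊥ : Ideal (MvPolynomial (Fin (n + 1)) k)).colon {f} = ⊥ := by
      ext s
      simp [Submodule.mem_colon_singleton, hf]
    have h2 (r : ℕ) : GeomIrred.gradedPart (⊥ : Ideal (MvPolynomial (Fin (n + 1)) k)) r = ⊥ := by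
      ext s
      rw [GeomIrred.mem_gradedPart]
      constructor
      · exact fun hs => hs.1
      · rintro rfl
        exact ⟨zero_mem _, MvPolynomial.isHomogeneous_zero _ _ _⟩
    rw [h1, h2, h2, bot_sup_eq, finrank_bot, add_zero, zero_add] at h
    exact h
  -- in degree `p ^ M`, the Hilbert function of `S/(f)` is `1` modulo `p`
  obtain ⟨M, hM⟩ : ∃ M, T + n + d < p ^ M := ⟨T + n + d, Nat.lt_pow_self hp.one_lt⟩
  have h := hT (d + (p ^ M - d)) (by omega)
  rw [hprinc, GeomIrred.finrank_homogeneousSubmodule, GeomIrred.finrank_homogeneousSubmodule,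
    show p ^ M - d + n = p ^ M + (n - d) by omega,
    show d + (p ^ M - d) = p ^ M by omega] at h
  have e1 := GeomIrred.choose_pow_add_modEq hp (M := M) (n := n) (by omega) (n - d)
  have e2 := GeomIrred.choose_pow_add_modEq hp (M := M) (n := n) (by omega) n
  rw [Nat.choose_eq_zero_of_lt (by omega : n - d < n)] at e1
  rw [Nat.choose_self] at e2
  have h01 : 0 ≡ 1 [MOD p] := e1.symm.trans (h.trans e2)
  exact hp.one_lt.ne' (Nat.dvd_one.mp ((Nat.modEq_zero_iff_dvd).mp h01.symm))
end

section
/- Let p be a prime number. Every perfect pseudo-algebraically closed field whose absolute Galois group is a pro-p group is a C_1 field; that is, every hypersurface X ⊂ P^n_k of degree d ≤ n over such a field k has a k-rational point. -/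
/-!
Suppose the form `f` has no nontrivial zero over `k`. The contradiction comes from Hilbert functions
modulo `p`. Write `S = k[x₀, …, xₙ]` and `J_m` for the degree-`m` part of a homogeneous ideal `J`.

*Every homogeneous ideal `J` containing `f` satisfies `dim J_m ≡ dim S_m (mod p)` for `m ≫ 0`*
(`eventually_finrank_gr_modEq`). The proof is by Noetherian induction on `J`.

* If `J` is proper and not prime, there are homogeneous `x, y ∉ J` with `xy ∈ J`, and the exact
  sequence `0 → S/(J : x)(-e) → S/J → S/(J + (x)) → 0`, with `e` the degree of `x`, reduces the claim
  to two larger ideals.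
* If `J` contains all the variables, then `J_m = S_m` for `m ≥ 1`.
* Otherwise `J` is prime and some `xᵢ ∉ J`. Let `F` be the field of degree-zero homogeneous fractions
  of `S/J`. If `k` were algebraically closed in `F`, then, `k` being perfect, the affine chart
  `xᵢ ≠ 0` of `Proj (S/J)` would be geometrically integral, and the PAC property would give a
  `k`-point of it, hence a zero of `f`. So `F` contains a nontrivial finite extension `k'` of `k`,
  whose degree is a positive power of `p`. The conductor `I/J = {s ∈ S/J : k' s ⊆ S/J}` is a nonzero
  homogeneous ideal whose graded pieces are `k'`-vector spaces, so `p ∣ dim I_m - dim J_m`, and the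
  claim for `J` follows from that for `I`.

For `J = (f)` the claim reads `C(n + m - d, n) ≡ C(n + m, n) (mod p)` for `m ≫ 0`. At `m = p ^ M`
with `M` large, the left side is `C(n - d, n) = 0` modulo `p` since `1 ≤ d ≤ n`, whereas the right
side is `C(n, n) = 1`.
-/

/-!
Let `p` be a prime.  Every perfect pseudo-algebraically closed field whose absolute Galois
group is a pro-`p` group (equivalently: every finite separable extension has degree a power
of `p`) is a `C₁` field: every hypersurface of degree `d ≤ n` in `ℙⁿ_k` — i.e. the zero
locus of a nonzero homogeneous polynomial of degree `d` in `n+1` variables — has a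
`k`-rational point.

`k` is pseudo-algebraically closed when every geometrically integral `k`-scheme of finite
type has a `k`-rational point.
-/

open AlgebraicGeometry CategoryTheory

/-- A field `k` is pseudo-algebraically closed if every geometrically integral `k`-scheme
of finite type has a `k`-rational point. -/
def IsPseudoAlgebraicallyClosed (k : Type) [Field k] : Prop :=
  ∀ (X : Scheme.{0}) (f : X ⟶ Spec (CommRingCat.of k)),
    LocallyOfFiniteType f → QuasiCompact f →
    IsIntegral (Limits.pullback f
      (Spec.map (CommRingCat.ofHom (algebraMap k (AlgebraicClosure k))))) →
    ∃ s : Spec (CommRingCat.of k) ⟶ X, s ≫ f = 𝟙 _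

namespace PACProP
open scoped TensorProduct

/-! ### Geometric integrality over a perfect field -/

/-- If `k` is algebraically closed in `A`, minimal polynomials over `k` stay minimal over `A`: the
coefficients of the minimal polynomial over `A` are integral over `k`, hence lie in `k`. -/
theorem natDegree_minpoly_le {k A E : Type*} [Field k] [Field A] [Field E] [Algebra k A]
    [Algebra A E] [Algebra k E] [IsScalarTower k A E]
    (hA : ∀ x : A, IsAlgebraic k x → x ∈ (algebraMap k A).range)
    (β : E) (hβ : IsIntegral k β) :
    (minpoly k β).natDegree ≤ (minpoly A β).natDegree := by
  have hβA : IsIntegral A β := hβ.tower_top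
  have h := integralClosure.mem_lifts_of_monic_of_dvd_map A (minpoly.monic hβ)
    (minpoly.monic hβA) (minpoly.dvd_map_of_isScalarTower k A β)
  have h2 : minpoly A β ∈ Polynomial.lifts (algebraMap k A) := by
    rw [Polynomial.lifts_iff_coeff_lifts] at h ⊢
    intro n
    obtain ⟨y, hy⟩ := h n
    rw [← hy]
    exact hA _ (y.2 : IsIntegral k (y : A)).isAlgebraic
  obtain ⟨q, hq, hdeg, hmon⟩ := Polynomial.lifts_and_natDegree_eq_and_monic h2 (minpoly.monic hβA)
  rw [← hdeg]
  refine Polynomial.natDegree_le_of_dvd (minpoly.dvd k β ?_) hmon.ne_zero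
  rw [← Polynomial.aeval_map_algebraMap A, hq, minpoly.aeval]

/-- An extension `A` of a perfect field `k` in which `k` is algebraically closed is linearly disjoint
from every integral extension `B`. For finite `B` a primitive element yields a power basis, which
stays independent over `A` by `natDegree_minpoly_le`. -/
theorem linearDisjoint_of_relAlgClosed {k E : Type*} [Field k] [PerfectField k] [Field E]
    [Algebra k E] (A : IntermediateField k E) (B : Subalgebra k E) [Algebra.IsIntegral k B]
    (hA : ∀ x : A, IsAlgebraic k x → x ∈ (algebraMap k A).range) :
    A.toSubalgebra.LinearDisjoint B := by
  refine Subalgebra.LinearDisjoint.of_linearDisjoint_finite_right _ _ fun B' _ _ ↦ ?_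
  let B'' : IntermediateField k E := B'.toIntermediateField' (isField_of_isIntegral_of_isField'
    (Field.toIsField k))
  have hfin : FiniteDimensional k B'' := ‹Module.Finite k B'›
  have : Algebra.IsSeparable k B'' := inferInstance
  let pb := Field.powerBasisOfFiniteOfSeparable k B''
  have hβ : IsIntegral k (pb.gen : E) :=
    (IsIntegral.of_finite k pb.gen).map B''.val
  have hle := natDegree_minpoly_le hA (pb.gen : E) hβ
  have hdim : pb.dim = (minpoly k (pb.gen : E)).natDegree := by
    rw [← pb.natDegree_minpoly]
    congr 1
    exact (minpoly.algHom_eq B''.val B''.val.injective pb.gen).symm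
  refine Subalgebra.LinearDisjoint.of_basis_right A.toSubalgebra B' pb.basis ?_
  have hli := linearIndependent_pow (K := A) (pb.gen : E)
  have := hli.comp (Fin.castLE (hdim.trans_le hle)) (Fin.castLE_injective _)
  have heq : (fun i ↦ ((pb.basis i : B'') : E)) = fun i : Fin pb.dim ↦ (pb.gen : E) ^ (i : ℕ) := by
    ext i
    simp [pb.basis_eq_pow]
  change LinearIndependent A (fun i ↦ ((pb.basis i : B'') : E))
  rw [heq]
  exact this

theorem isDomain_tensor {k F : Type} [Field k] [PerfectField k] [Field F] [Algebra k F]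
    (hF : ∀ x : F, IsAlgebraic k x → x ∈ (algebraMap k F).range) :
    IsDomain (F ⊗[k] AlgebraicClosure k) := by
  let E := AlgebraicClosure F
  let i : F →ₐ[k] E := IsScalarTower.toAlgHom k F E
  let j : AlgebraicClosure k →ₐ[k] E := IsAlgClosed.lift
  refine Subalgebra.LinearDisjoint.isDomain_of_injective (fa := i) (fb := j)
    i.injective j.injective ?_
  have : Algebra.IsIntegral k j.range :=
    Algebra.IsIntegral.of_surjective j.rangeRestrict j.rangeRestrict_surjective
  refine linearDisjoint_of_relAlgClosed i.fieldRange j.range ?_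
  rintro ⟨_, x, rfl⟩ hx
  have hx' : IsAlgebraic k x := by
    have := hx.algHom i.fieldRange.val
    exact (isAlgebraic_algHom_iff i i.injective).1 this
  obtain ⟨c, rfl⟩ := hF x hx'
  exact ⟨c, Subtype.ext (i.commutes c).symm⟩

/-- The PAC property for affine schemes: a finitely generated `k`-algebra that embeds in a field in
which the perfect field `k` is algebraically closed has a `k`-point. -/
theorem exists_algHom_of_pac {k F B : Type} [Field k] [PerfectField k]
    (hPAC : IsPseudoAlgebraicallyClosed k) [Field F] [Algebra k F]
    (hF : ∀ x : F, IsAlgebraic k x → x ∈ (algebraMap k F).range)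
    [CommRing B] [Algebra k B] [Algebra.FiniteType k B] (i : B →ₐ[k] F)
    (hi : Function.Injective i) : Nonempty (B →ₐ[k] k) := by
  have hdom : IsDomain (B ⊗[k] AlgebraicClosure k) := by
    have := isDomain_tensor hF
    refine Function.Injective.isDomain
      (Algebra.TensorProduct.map i (AlgHom.id k (AlgebraicClosure k))).toRingHom ?_
    exact Module.Flat.rTensor_preserves_injective_linearMap i.toLinearMap hi
  obtain ⟨s, hs⟩ := hPAC (Spec (CommRingCat.of B)) (Spec.map (CommRingCat.ofHom (algebraMap k B)))
    (by
      rw [HasRingHomProperty.Spec_iff (P := @LocallyOfFiniteType)]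
      exact (RingHom.finiteType_algebraMap).2 inferInstance) inferInstance
    (by
      have : IsIntegral (Spec (CommRingCat.of (B ⊗[k] AlgebraicClosure k))) := inferInstance
      have : Nonempty (Spec (CommRingCat.of (B ⊗[k] AlgebraicClosure k))) := inferInstance
      have := this.map (pullbackSpecIso k B (AlgebraicClosure k)).inv
      exact isIntegral_of_isOpenImmersion (pullbackSpecIso k B (AlgebraicClosure k)).hom)
  obtain ⟨φ, rfl⟩ := Spec.map_surjective s
  rw [← Spec.map_comp, ← Spec.map_id] at hs
  have h2 := Spec.map_injective hs
  refine ⟨{ φ.hom with commutes' := fun c ↦ ?_ }⟩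
  exact congr($(h2).hom c)

/-! ### Graded pieces of ideals -/

open MvPolynomial

attribute [local instance] MvPolynomial.gradedAlgebra

variable {k : Type} [Field k] {N : ℕ}

/-- The degree-`m` part `J_m` of an ideal `J` of the polynomial ring, as a space of polynomials. -/
noncomputable def gr (J : Ideal (MvPolynomial (Fin N) k)) (m : ℕ) :
    Submodule k (MvPolynomial (Fin N) k) :=
  homogeneousSubmodule (Fin N) k m ⊓ J.restrictScalars k

theorem mem_gr {J : Ideal (MvPolynomial (Fin N) k)} {m : ℕ} {x : MvPolynomial (Fin N) k} :
    x ∈ gr J m ↔ x.IsHomogeneous m ∧ x ∈ J := Iff.rfl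

instance (J : Ideal (MvPolynomial (Fin N) k)) (m : ℕ) : FiniteDimensional k (gr J m) := by
  have : FiniteDimensional k (homogeneousSubmodule (Fin N) k m) :=
    Module.Finite.of_fg (homogeneousSubmodule_fg (Fin N) k m)
  exact Submodule.finiteDimensional_of_le inf_le_left

theorem decompose_eq (t : MvPolynomial (Fin N) k) (m : ℕ) :
    (DirectSum.decompose (homogeneousSubmodule (Fin N) k) t m : MvPolynomial (Fin N) k) =
      homogeneousComponent m t :=
  decomposition.decompose'_apply t m

theorem homogeneousComponent_mul_right (t : MvPolynomial (Fin N) k) {x : MvPolynomial (Fin N) k}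
    {e : ℕ} (hx : x.IsHomogeneous e) (m : ℕ) :
    homogeneousComponent (m + e) (t * x) = homogeneousComponent m t * x := by
  have := DirectSum.coe_decompose_mul_add_of_right_mem (homogeneousSubmodule (Fin N) k)
    (a := t) (b := x) (i := m) (j := e) hx
  rwa [decompose_eq, decompose_eq] at this

/-- Dimension count for the surjection `J_{m+e} × S_m → (J + (x))_{m+e}`, `(j, t) ↦ j + t x`, whose
kernel is isomorphic to `(J : x)_m`. -/
theorem finrank_gr_sup_span {J : Ideal (MvPolynomial (Fin N) k)}
    (hJ : J.IsHomogeneous (homogeneousSubmodule (Fin N) k)) {x : MvPolynomial (Fin N) k} {e : ℕ}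
    (hx : x.IsHomogeneous e) (m : ℕ) :
    Module.finrank k (gr (J ⊔ Ideal.span {x}) (m + e)) +
      Module.finrank k (gr (J.colon {x}) m) =
    Module.finrank k (gr J (m + e)) +
      Module.finrank k (gr (⊤ : Ideal (MvPolynomial (Fin N) k)) m) := by
  let φ : (gr J (m + e) × gr (⊤ : Ideal (MvPolynomial (Fin N) k)) m) →ₗ[k]
      MvPolynomial (Fin N) k :=
    LinearMap.coprod (gr J (m + e)).subtype
      ((LinearMap.mulRight k x) ∘ₗ (gr (⊤ : Ideal (MvPolynomial (Fin N) k)) m).subtype)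
  have hφ : ∀ y, φ y = y.1 + y.2 * x := fun y ↦ by simp [φ]
  have hrange : LinearMap.range φ = gr (J ⊔ Ideal.span {x}) (m + e) := by
    ext s
    rw [mem_gr]
    constructor
    · rintro ⟨y, rfl⟩
      rw [hφ]
      have h1 := mem_gr.1 y.1.2
      have h2 := mem_gr.1 y.2.2
      exact ⟨h1.1.add (h2.1.mul hx), Ideal.add_mem _ (Ideal.mem_sup_left h1.2)
        (Ideal.mul_mem_left _ _ (Ideal.mem_sup_right (Ideal.mem_span_singleton_self x)))⟩
    · rintro ⟨hs, hsJ⟩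
      obtain ⟨j, hj, t, ht, rfl⟩ := Submodule.mem_sup.1 hsJ
      obtain ⟨t, rfl⟩ := Ideal.mem_span_singleton'.1 ht
      refine ⟨⟨⟨homogeneousComponent (m + e) j, homogeneousComponent_isHomogeneous _ _,
        homogeneousComponent_mem_of_mem hJ hj _⟩,
        ⟨homogeneousComponent m t, homogeneousComponent_isHomogeneous _ _, trivial⟩⟩, ?_⟩
      rw [hφ]
      rw [← homogeneousComponent_eq_self hs, map_add, homogeneousComponent_mul_right t hx]
  have hker : Module.finrank k (LinearMap.ker φ) = Module.finrank k (gr (J.colon {x}) m) := by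
    symm
    let ψ : gr (J.colon {x}) m →ₗ[k] (gr J (m + e) × gr (⊤ : Ideal (MvPolynomial (Fin N) k)) m) :=
      { toFun := fun t ↦ (⟨-(t * x), ((mem_gr.1 t.2).1.mul hx).neg, J.neg_mem
            (by simpa [mul_comm] using Submodule.mem_colon_singleton.1 (mem_gr.1 t.2).2)⟩,
          ⟨t, (mem_gr.1 t.2).1, trivial⟩)
        map_add' := fun a b ↦ by ext1 <;> apply Subtype.ext <;> simp <;> ring
        map_smul' := fun a b ↦ by ext1 <;> apply Subtype.ext <;> simp }
    have hψ : Function.Injective ψ := fun a b h ↦ by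
      have := congr((($h).2 : MvPolynomial (Fin N) k))
      exact Subtype.ext this
    rw [← LinearMap.finrank_range_of_inj hψ]
    suffices h : LinearMap.range ψ = LinearMap.ker φ by rw [h]
    ext y
    rw [LinearMap.mem_ker, hφ]
    constructor
    · rintro ⟨t, rfl⟩
      simp [ψ]
    · intro h
      refine ⟨⟨y.2, (mem_gr.1 y.2.2).1, Submodule.mem_colon_singleton.2 ?_⟩, ?_⟩
      · have : (y.2 : MvPolynomial (Fin N) k) * x = - y.1 := by linear_combination h
        rw [smul_eq_mul, this]
        exact J.neg_mem (mem_gr.1 y.1.2).2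
      · ext1 <;> apply Subtype.ext <;> simp [ψ]
        linear_combination -h
  have h := LinearMap.finrank_range_add_finrank_ker φ
  rw [hrange, hker, Module.finrank_prod] at h
  exact h

theorem isHomogeneous_colon {J : Ideal (MvPolynomial (Fin N) k)}
    (hJ : J.IsHomogeneous (homogeneousSubmodule (Fin N) k)) {x : MvPolynomial (Fin N) k} {e : ℕ}
    (hx : x.IsHomogeneous e) :
    (J.colon {x}).IsHomogeneous (homogeneousSubmodule (Fin N) k) := by
  intro m t ht
  rw [Submodule.mem_colon_singleton, smul_eq_mul] at ht ⊢
  rw [decompose_eq, ← homogeneousComponent_mul_right t hx]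
  exact homogeneousComponent_mem_of_mem hJ ht _

theorem gr_eq_of_forall_X_mem {J : Ideal (MvPolynomial (Fin N) k)} (hX : ∀ i, X i ∈ J) {m : ℕ} (hm : 1 ≤ m) :
    gr J m = gr (⊤ : Ideal (MvPolynomial (Fin N) k)) m := by
  ext s
  simp only [mem_gr, Submodule.mem_top, and_true, and_iff_left_iff_imp]
  intro hs
  have hle : Ideal.span (X '' (Set.univ : Set (Fin N))) ≤ J := by
    rw [Ideal.span_le]
    rintro _ ⟨i, -, rfl⟩
    exact hX i
  refine hle (mem_ideal_span_X_image.2 fun e he ↦ ?_)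
  by_contra! h
  have : e = 0 := by ext i; exact h i trivial
  have h2 := hs.degree_eq_sum_deg_support he
  simp [this] at h2
  omega

theorem finrank_gr_top (m : ℕ) :
    Module.finrank k (gr (⊤ : Ideal (MvPolynomial (Fin (N+1)) k)) m) = (N + m).choose N := by
  have h1 : gr (⊤ : Ideal (MvPolynomial (Fin (N+1)) k)) m =
     AddMonoidAlgebra.supported k k {d : Fin (N+1) →₀ ℕ | d.degree = m} := by
    rw [← homogeneousSubmodule_eq_finsupp_supported]
    exact inf_eq_left.2 fun _ _ ↦ trivial
  have h2 : {d : Fin (N+1) →₀ ℕ | d.degree = m} =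
      ((Finset.univ : Finset (Fin (N + 1))).finsuppAntidiag m : Set (Fin (N+1) →₀ ℕ)) := by
    ext d
    simp [Finset.mem_finsuppAntidiag, Finsupp.degree_eq_sum]
  rw [h1, h2, (AddMonoidAlgebra.supportedEquivFinsupp _).finrank_eq, Module.finrank_finsupp_self]
  simp only [SetLike.coe_sort_coe, Fintype.card_coe, Finset.card_finsuppAntidiag_nat_eq_choose,
    Finset.card_univ, Fintype.card_fin]
  rw [show N + 1 + m - 1 = N + m by omega, Nat.choose_symm_add]

/-- Periodicity of binomial coefficients modulo `p`, from Vandermonde's identity and the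
divisibility of `(p ^ M).choose i` by `p` for `0 < i < p ^ M`. -/
theorem choose_pow_add_modEq {p : ℕ} (hp : p.Prime) {M n : ℕ} (hn : n < p ^ M) (a : ℕ) :
    (p ^ M + a).choose n ≡ a.choose n [MOD p] := by
  rw [Nat.add_choose_eq, ← Finset.add_sum_erase _ _ (a := (0, n)) (by simp)]
  have : p ∣ ∑ ij ∈ (Finset.HasAntidiagonal.antidiagonal n).erase (0, n), (p ^ M).choose ij.1 * a.choose ij.2 := by
    refine Finset.dvd_sum fun ij hij ↦ ?_
    simp only [Finset.mem_erase, Finset.HasAntidiagonal.mem_antidiagonal, ne_eq, Prod.ext_iff] at hij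
    exact Dvd.dvd.mul_right (hp.dvd_choose_pow (by omega) (by omega)) _
  simpa using (Nat.modEq_zero_iff_dvd.2 this).add_left (a.choose n)

theorem aeval_mul_of_isHomogeneous {K : Type} [Field K] [Algebra k K]
    {f : MvPolynomial (Fin N) k} {d : ℕ} (hf : f.IsHomogeneous d) (c : K) (v : Fin N → K) :
    aeval (fun j ↦ c * v j) f = c ^ d * aeval v f := by
  rw [aeval_def, aeval_def, eval₂_eq', eval₂_eq', Finset.mul_sum]
  refine Finset.sum_congr rfl fun s hs ↦ ?_
  have hs' : ∑ i, s i = d := by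
    rw [hf.degree_eq_sum_deg_support hs]
    exact (Finset.sum_subset (Finset.subset_univ _) (by simp)).symm
  simp only [mul_pow, Finset.prod_mul_distrib, Finset.prod_pow_eq_pow_sum, hs']
  ring

/-! ### Degree-zero fractions and the conductor -/

variable (J : Ideal (MvPolynomial (Fin N) k)) [J.IsPrime]

/-- The canonical map from the polynomial ring `S` to the fraction field of `S/J`; its kernel is
`J`. -/
noncomputable def toFrac :
    MvPolynomial (Fin N) k →ₐ[k] FractionRing (MvPolynomial (Fin N) k ⧸ J) :=
  (IsScalarTower.toAlgHom k (MvPolynomial (Fin N) k ⧸ J) _).comp (Ideal.Quotient.mkₐ k J)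

theorem toFrac_eq_zero {s : MvPolynomial (Fin N) k} : toFrac J s = 0 ↔ s ∈ J := by
  simp [toFrac, Ideal.Quotient.eq_zero_iff_mem]

/-- The field of fractions `a / b` in `Frac (S/J)` with `a`, `b` homogeneous of the same degree, i.e.
the function field of `Proj (S/J)` (when `J` is homogeneous and not irrelevant). -/
noncomputable def degZero : IntermediateField k (FractionRing (MvPolynomial (Fin N) k ⧸ J)) where
  carrier := {x | ∃ (e : ℕ) (a b : MvPolynomial (Fin N) k), a.IsHomogeneous e ∧ b.IsHomogeneous e ∧
    toFrac J b ≠ 0 ∧ x = toFrac J a / toFrac J b}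
  mul_mem' := by
    rintro _ _ ⟨e, a, b, ha, hb, h0, rfl⟩ ⟨e', a', b', ha', hb', h0', rfl⟩
    refine ⟨e + e', a * a', b * b', ha.mul ha', hb.mul hb', ?_, ?_⟩
    · simp [h0, h0']
    · simp [mul_div_mul_comm]
  add_mem' := by
    rintro _ _ ⟨e, a, b, ha, hb, h0, rfl⟩ ⟨e', a', b', ha', hb', h0', rfl⟩
    refine ⟨e + e', a * b' + b * a', b * b', (ha.mul hb').add (hb.mul ha'), hb.mul hb', ?_, ?_⟩
    · simp [h0, h0']
    · simp [div_add_div _ _ h0 h0']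
  algebraMap_mem' := fun c ↦
    ⟨0, C c, 1, isHomogeneous_C _ _, isHomogeneous_one _ _, by simp, by
      simp [← MvPolynomial.algebraMap_eq]⟩
  inv_mem' := by
    rintro _ ⟨e, a, b, ha, hb, h0, rfl⟩
    by_cases h : toFrac J a = 0
    · exact ⟨0, 0, 1, isHomogeneous_zero _ _ _, isHomogeneous_one _ _, by simp, by simp [h]⟩
    · exact ⟨e, b, a, hb, ha, h, by simp⟩

variable {J}

/-- Multiplication by a degree-zero fraction respects the grading of `S/J`. -/
theorem comp_eq (hJ : J.IsHomogeneous (homogeneousSubmodule (Fin N) k))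
    {c : FractionRing (MvPolynomial (Fin N) k ⧸ J)} (hc : c ∈ degZero J)
    {s t : MvPolynomial (Fin N) k} (h : c * toFrac J s = toFrac J t) (m : ℕ) :
    c * toFrac J (homogeneousComponent m s) = toFrac J (homogeneousComponent m t) := by
  obtain ⟨e, a, b, ha, hb, h0, rfl⟩ := hc
  rw [div_mul_eq_mul_div, div_eq_iff h0, ← sub_eq_zero, ← map_mul, ← map_mul, ← map_sub,
    toFrac_eq_zero] at h ⊢
  have := homogeneousComponent_mem_of_mem hJ h (m + e)
  rwa [map_sub, mul_comm a, homogeneousComponent_mul_right _ ha,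
    homogeneousComponent_mul_right _ hb, mul_comm _ a] at this

theorem finrank_restrictScalars_mul {K : Type} [Field K] [Algebra k K] (k' : IntermediateField k K)
    (V : Submodule k' K) :
    Module.finrank k k' * Module.finrank k' V = Module.finrank k (V.restrictScalars k) :=
  Module.finrank_mul_finrank k k' V

/-- A finite extension `k'` of `k` among the degree-zero fractions yields a homogeneous ideal `I`,
strictly larger than `J`, such that every `(I/J)_m` is a `k'`-vector space: the preimage in `S` of
the conductor `{s ∈ S/J : k' s ⊆ S/J}`. -/
theorem exists_larger_ideal (hJ : J.IsHomogeneous (homogeneousSubmodule (Fin N) k))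
    (k' : IntermediateField k (FractionRing (MvPolynomial (Fin N) k ⧸ J)))
    [FiniteDimensional k k'] (hk' : k' ≤ degZero J) :
    ∃ I : Ideal (MvPolynomial (Fin N) k), I.IsHomogeneous (homogeneousSubmodule (Fin N) k) ∧
      J < I ∧ ∀ m, ∃ q, Module.finrank k (gr I m) =
        Module.finrank k (gr J m) + Module.finrank k k' * q := by
  let I : Ideal (MvPolynomial (Fin N) k) :=
    { carrier := {s | ∀ c ∈ k', c * toFrac J s ∈ (toFrac J).range}
      add_mem' := fun {a b} ha hb c hc ↦ by
        rw [map_add, mul_add]; exact add_mem (ha c hc) (hb c hc)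
      zero_mem' := fun c hc ↦ by simp [zero_mem]
      smul_mem' := fun r s hs c hc ↦ by
        rw [smul_eq_mul, map_mul, mul_left_comm]
        exact mul_mem ⟨r, rfl⟩ (hs c hc) }
  have hI : ∀ s, s ∈ I ↔ ∀ c ∈ k', c * toFrac J s ∈ (toFrac J).range := fun s ↦ Iff.rfl
  have hJI : J ≤ I := fun s hs c _ ↦ by
    rw [(toFrac_eq_zero J).2 hs, mul_zero]; exact zero_mem _
  refine ⟨I, ?_, ?_, fun m ↦ ?_⟩
  · intro m s hs
    rw [decompose_eq]
    intro c hc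
    obtain ⟨t, ht⟩ := hs c hc
    exact ⟨_, (comp_eq hJ (hk' hc) ht.symm m).symm⟩
  · refine lt_of_le_of_ne hJI fun hIJ ↦ ?_
    -- A common denominator of a `k`-basis of `k'` lies in `I` but not in `J`.
    let bs := Module.finBasis k k'
    obtain ⟨⟨b, hb0⟩, hb⟩ := IsLocalization.exist_integer_multiples
      (nonZeroDivisors (MvPolynomial (Fin N) k ⧸ J)) Finset.univ
      (fun i ↦ (bs i : FractionRing (MvPolynomial (Fin N) k ⧸ J)))
    obtain ⟨s, rfl⟩ := Ideal.Quotient.mk_surjective b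
    have hsI : s ∈ I := by
      intro c hc
      have hsum : c =
          ∑ i, bs.repr ⟨c, hc⟩ i • (bs i : FractionRing (MvPolynomial (Fin N) k ⧸ J)) := by
        refine (congrArg k'.val (bs.sum_repr ⟨c, hc⟩)).symm.trans ?_
        simp only [map_sum, map_smul]
        rfl
      rw [hsum, Finset.sum_mul]
      refine sum_mem fun i _ ↦ ?_
      rw [smul_mul_assoc]
      refine Subalgebra.smul_mem _ ?_ _
      obtain ⟨y, hy⟩ := hb i (Finset.mem_univ i)
      obtain ⟨y, rfl⟩ := Ideal.Quotient.mk_surjective y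
      refine ⟨y, ?_⟩
      rw [mul_comm]
      refine hy.trans ?_
      exact Algebra.smul_def _ _
    rw [← hIJ, ← Ideal.Quotient.eq_zero_iff_mem] at hsI
    exact nonZeroDivisors.ne_zero hb0 hsI
  -- `V` is the largest `k'`-subspace of the image of `S_m`; it is the image of `I_m`.
  · let V : Submodule k' (FractionRing (MvPolynomial (Fin N) k ⧸ J)) :=
      { carrier := {y | ∀ c ∈ k', c * y ∈
          (homogeneousSubmodule (Fin N) k m).map (toFrac J).toLinearMap}
        add_mem' := fun {a b} ha hb c hc ↦ by
          rw [mul_add]; exact add_mem (ha c hc) (hb c hc)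
        zero_mem' := fun c hc ↦ by simp [zero_mem]
        smul_mem' := fun r s hs c hc ↦ by
          rw [IntermediateField.smul_def, smul_eq_mul, ← mul_assoc]
          exact hs _ (mul_mem hc r.2) }
    refine ⟨Module.finrank k' V, ?_⟩
    rw [finrank_restrictScalars_mul]
    let φ := (toFrac J).toLinearMap ∘ₗ (gr I m).subtype
    have hrange : LinearMap.range φ = V.restrictScalars k := by
      ext y
      constructor
      · rintro ⟨s, rfl⟩ c hc
        obtain ⟨t, ht⟩ := (mem_gr.1 s.2).2 c hc
        refine ⟨homogeneousComponent m t, homogeneousComponent_mem _ _, ?_⟩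
        have := comp_eq hJ (hk' hc) ht.symm m
        rw [homogeneousComponent_eq_self (mem_gr.1 s.2).1] at this
        exact this.symm
      · intro hy
        obtain ⟨s, hs, rfl⟩ : y ∈
            (homogeneousSubmodule (Fin N) k m).map (toFrac J).toLinearMap := by
          simpa using hy 1 (one_mem _)
        refine ⟨⟨s, hs, fun c hc ↦ ?_⟩, rfl⟩
        obtain ⟨t, -, ht⟩ := hy c hc
        exact ⟨t, ht⟩
    have hker : LinearMap.ker φ = (gr J m).comap (gr I m).subtype := by
      ext s
      rw [LinearMap.mem_ker, Submodule.mem_comap, mem_gr]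
      exact ⟨fun h ↦ ⟨(mem_gr.1 s.2).1, (toFrac_eq_zero J).1 h⟩, fun h ↦ (toFrac_eq_zero J).2 h.2⟩
    have hle : gr J m ≤ gr I m := fun s hs ↦ ⟨hs.1, hJI hs.2⟩
    have h := LinearMap.finrank_range_add_finrank_ker φ
    rw [hrange, hker, (Submodule.comapSubtypeEquivOfLe hle).finrank_eq] at h
    rw [← h, add_comm]

/-! ### Rational points and the induction -/

/-- If `k` is algebraically closed in the function field of `Proj (S/J)`, then the chart `xᵢ ≠ 0` has
a `k`-point, whose coordinates `xⱼ / xᵢ` form a zero of every form `f ∈ J`. -/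
theorem exists_zero_of_relAlgClosed [PerfectField k] (hPAC : IsPseudoAlgebraicallyClosed k)
    {f : MvPolynomial (Fin N) k} {d : ℕ} (hf : f.IsHomogeneous d) (hfJ : f ∈ J) {i : Fin N}
    (hi : X i ∉ J)
    (hrel : ∀ x : degZero J, IsAlgebraic k x → x ∈ (algebraMap k (degZero J)).range) :
    ∃ z : Fin N → k, z ≠ 0 ∧ aeval z f = 0 := by
  have hi' : toFrac J (X i) ≠ 0 := fun h ↦ hi ((toFrac_eq_zero J).1 h)
  let v : Fin N → degZero J := fun j ↦ ⟨(toFrac J (X i))⁻¹ * toFrac J (X j),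
    1, X j, X i, isHomogeneous_X _ _, isHomogeneous_X _ _, hi', by rw [div_eq_inv_mul]⟩
  let φ : MvPolynomial (Fin N) k →ₐ[k] degZero J := aeval v
  have : Algebra.FiniteType k φ.range :=
    Algebra.FiniteType.of_surjective φ.rangeRestrict φ.rangeRestrict_surjective
  obtain ⟨χ⟩ := exists_algHom_of_pac hPAC hrel φ.range.val Subtype.val_injective
  have hχ : χ.comp φ.rangeRestrict = aeval (fun j ↦ χ (φ.rangeRestrict (X j))) := by
    ext j; simp
  refine ⟨fun j ↦ χ (φ.rangeRestrict (X j)), fun h ↦ ?_, ?_⟩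
  · have h1 : φ.rangeRestrict (X i) = 1 := by
      apply Subtype.ext
      apply Subtype.ext
      simp [φ, v, hi']
    have h2 := congrFun h i
    simp [h1] at h2
  · rw [← hχ]
    have h1 : φ.rangeRestrict f = 0 := by
      apply Subtype.ext
      apply Subtype.ext
      have h2 : ((degZero J).val.comp φ) f = aeval (fun j ↦ ((v j : _) :
          FractionRing (MvPolynomial (Fin N) k ⧸ J))) f := by
        congr 1
        ext j; simp [φ]
      have h3 : toFrac J = aeval (fun j ↦ toFrac J (X j)) := by
        ext j; simp
      refine h2.trans ?_
      rw [aeval_mul_of_isHomogeneous hf, ← h3, (toFrac_eq_zero J).2 hfJ, mul_zero]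
      rfl
    simp [h1]

/-- The inductive heart of the argument: in the absence of a nontrivial zero of `f`, every
homogeneous ideal containing `f` has Hilbert function congruent to that of the whole ring. -/
theorem eventually_finrank_gr_modEq {p : ℕ} [PerfectField k]
    (hPAC : IsPseudoAlgebraicallyClosed k)
    (hGalProP : ∀ (L : Type) [Field L] [Algebra k L], FiniteDimensional k L →
      Algebra.IsSeparable k L → ∃ m : ℕ, Module.finrank k L = p ^ m)
    {f : MvPolynomial (Fin N) k} {d : ℕ} (hf : f.IsHomogeneous d)
    (hno : ¬ ∃ z : Fin N → k, z ≠ 0 ∧ aeval z f = 0)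
    (J : Ideal (MvPolynomial (Fin N) k))
    (hJ : J.IsHomogeneous (homogeneousSubmodule (Fin N) k)) (hfJ : f ∈ J) :
    ∃ m₀, ∀ m, m₀ ≤ m → Module.finrank k (gr J m) ≡
      Module.finrank k (gr (⊤ : Ideal (MvPolynomial (Fin N) k)) m) [MOD p] := by
  induction J using WellFoundedGT.induction with
  | _ J ih =>
  by_cases htop : J = ⊤
  · exact ⟨0, fun m _ ↦ by rw [htop]⟩
  by_cases hX : ∀ i, X i ∈ J
  · exact ⟨1, fun m hm ↦ by rw [gr_eq_of_forall_X_mem hX hm]⟩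
  push Not at hX
  obtain ⟨i, hi⟩ := hX
  by_cases hprime : J.IsPrime
  -- The prime case: pass to the conductor of a nontrivial finite extension of `k`.
  · have hex : ∃ x : degZero J, IsAlgebraic k x ∧ x ∉ (algebraMap k (degZero J)).range := by
      by_contra! h
      exact hno (exists_zero_of_relAlgClosed hPAC hf hfJ hi h)
    obtain ⟨x, hx, hx'⟩ := hex
    have hxK : IsIntegral k (x : FractionRing (MvPolynomial (Fin N) k ⧸ J)) :=
      (hx.algHom (degZero J).val).isIntegral
    let k' := IntermediateField.adjoin k {(x : FractionRing (MvPolynomial (Fin N) k ⧸ J))}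
    have : FiniteDimensional k k' := IntermediateField.adjoin.finiteDimensional hxK
    have hk' : k' ≤ degZero J := by
      rw [IntermediateField.adjoin_simple_le_iff]
      exact x.2
    have hdvd : p ∣ Module.finrank k k' := by
      obtain ⟨e, he⟩ := hGalProP k' inferInstance inferInstance
      rcases Nat.eq_zero_or_pos e with rfl | hpos
      · rw [pow_zero, IntermediateField.finrank_adjoin_simple_eq_one_iff,
          IntermediateField.mem_bot] at he
        obtain ⟨c, hc⟩ := he
        exact absurd ⟨c, Subtype.ext hc⟩ hx'
      · rw [he]
        exact dvd_pow_self p hpos.ne'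
    obtain ⟨I, hI, hJI, hdim⟩ := exists_larger_ideal hJ k' hk'
    obtain ⟨m₀, hm₀⟩ := ih I hJI hI (hJI.le hfJ)
    refine ⟨m₀, fun m hm ↦ ?_⟩
    obtain ⟨q, hq⟩ := hdim m
    have h0 : Module.finrank k k' * q ≡ 0 [MOD p] :=
      Nat.modEq_zero_iff_dvd.2 (hdvd.mul_right q)
    have h1 := h0.add_left (Module.finrank k (gr J m))
    rw [← hq, add_zero] at h1
    exact h1.symm.trans (hm₀ m hm)
  -- The non-prime case: pass to `J + (x)` and `(J : x)`.
  · have hex : ∃ x y : MvPolynomial (Fin N) k, (∃ e, x.IsHomogeneous e) ∧ x * y ∈ J ∧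
        x ∉ J ∧ y ∉ J := by
      by_contra! h
      refine hprime (hJ.isPrime_of_homogeneous_mem_or_mem htop fun {x y} hx _ hxy ↦ ?_)
      by_contra! h'
      exact h'.2 (h x y hx hxy h'.1)
    obtain ⟨x, y, ⟨e, hx⟩, hxy, hxJ, hyJ⟩ := hex
    have hlt1 : J < J ⊔ Ideal.span {x} := by
      refine lt_of_le_of_ne le_sup_left fun h ↦ hxJ ?_
      rw [h]
      exact Ideal.mem_sup_right (Ideal.mem_span_singleton_self x)
    have hle2 : J ≤ J.colon {x} := fun s hs ↦
      Submodule.mem_colon_singleton.2 (J.mul_mem_right x hs)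
    have hlt2 : J < J.colon {x} := by
      refine lt_of_le_of_ne hle2 fun h ↦ hyJ ?_
      rw [h]
      exact Submodule.mem_colon_singleton.2 (by rwa [smul_eq_mul, mul_comm])
    obtain ⟨m₁, hm₁⟩ := ih _ hlt1 (hJ.sup (Ideal.homogeneous_span _ _ (by
      rintro _ rfl; exact ⟨e, hx⟩))) (hlt1.le hfJ)
    obtain ⟨m₂, hm₂⟩ := ih _ hlt2 (isHomogeneous_colon hJ hx) (hlt2.le hfJ)
    refine ⟨m₁ + m₂ + e, fun m hm ↦ ?_⟩
    obtain ⟨m, rfl⟩ : ∃ m', m = m' + e := ⟨m - e, by omega⟩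
    have h := finrank_gr_sup_span hJ hx m
    have h1 := (hm₁ (m + e) (by omega)).add (hm₂ m (by omega))
    rw [h] at h1
    exact Nat.ModEq.add_right_cancel' _ h1

/-- The conclusion, from the Hilbert function of `(f)`: its degree-`m` part has the dimension of
`S_{m-d}`. -/
theorem exists_zero {p : ℕ} (hp : p.Prime) [PerfectField k]
    (hPAC : IsPseudoAlgebraicallyClosed k)
    (hGalProP : ∀ (L : Type) [Field L] [Algebra k L], FiniteDimensional k L →
      Algebra.IsSeparable k L → ∃ m : ℕ, Module.finrank k L = p ^ m)
    {n d : ℕ} (hd1 : 1 ≤ d) (hdn : d ≤ n) {f : MvPolynomial (Fin (n + 1)) k} (hf : f ≠ 0)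
    (hhom : f.IsHomogeneous d) :
    ∃ z : Fin (n + 1) → k, z ≠ 0 ∧ aeval z f = 0 := by
  by_contra hno
  obtain ⟨m₀, hm₀⟩ := eventually_finrank_gr_modEq hPAC hGalProP hhom hno
    (⊥ ⊔ Ideal.span {f}) ((Ideal.IsHomogeneous.bot _).sup (Ideal.homogeneous_span _ _ (by
      rintro _ rfl; exact ⟨d, hhom⟩)))
    (Ideal.mem_sup_right (Ideal.mem_span_singleton_self f))
  -- A power of `p` beyond `m₀` and `n`.
  obtain ⟨M, hM⟩ : ∃ M, m₀ + n < p ^ M := ⟨m₀ + n, Nat.lt_pow_self hp.one_lt⟩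
  have hdim := finrank_gr_sup_span (Ideal.IsHomogeneous.bot _) hhom (p ^ M - d)
  have hbot : ∀ m, gr (⊥ : Ideal (MvPolynomial (Fin (n + 1)) k)) m = ⊥ := fun m ↦
    eq_bot_iff.2 fun x hx ↦ hx.2
  have hcolon : (⊥ : Ideal (MvPolynomial (Fin (n + 1)) k)).colon {f} = ⊥ := by
    ext s
    rw [Submodule.mem_colon_singleton]
    simp [hf]
  have h := hm₀ (p ^ M) (by omega)
  rw [hcolon, hbot, hbot, finrank_bot, add_zero, zero_add, Nat.sub_add_cancel (by omega)] at hdim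
  rw [hdim, finrank_gr_top, finrank_gr_top,
    show n + (p ^ M - d) = p ^ M + (n - d) by omega, add_comm n] at h
  have h1 := choose_pow_add_modEq hp (n := n) (M := M) (by omega) (n - d)
  have h2 := choose_pow_add_modEq hp (n := n) (M := M) (by omega) n
  rw [Nat.choose_eq_zero_of_lt (show n - d < n by omega)] at h1
  rw [Nat.choose_self] at h2
  have h3 := (h1.symm.trans h).trans h2
  exact hp.one_lt.ne' (Nat.dvd_one.1 ((Nat.modEq_zero_iff_dvd).1 h3.symm))

end PACProP

theorem pac_perfect_pro_p_is_C1
    (p : ℕ) (hp : p.Prime) (k : Type) [Field k] [PerfectField k]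
    (hPAC : IsPseudoAlgebraicallyClosed k)
    (hGalProP : ∀ (L : Type) [Field L] [Algebra k L], FiniteDimensional k L →
      Algebra.IsSeparable k L → ∃ m : ℕ, Module.finrank k L = p ^ m)
    (n d : ℕ) (hn : 1 ≤ n) (hd1 : 1 ≤ d) (hdn : d ≤ n)
    (f : MvPolynomial (Fin (n + 1)) k) (hf : f ≠ 0)
    (hhom : f.IsHomogeneous d) :
    ∃ z : Fin (n + 1) → k, z ≠ 0 ∧ MvPolynomial.aeval z f = 0 := by
  exact PACProP.exists_zero hp hPAC hGalProP hd1 hdn hf hhom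
end

section
/- Let k be a perfect pseudo-algebraically closed field. Every hypersurface X ⊂ P^n_k of degree d ≤ n has index 1 over k; that is, the greatest common divisor of the degrees [k(x) : k] over all closed points x of X equals 1. -/
/-!
Suppose the degrees `[L : k]` of the finite extensions `L / k` over which `f` has a nontrivial
zero do not generate `ℤ`; then a prime `ℓ` divides all of them. Write `S = k[x₀, …, xₙ]` and
`H I t = dim (S ⧸ I)_t` for a homogeneous ideal `I`. The heart of the proof is that, for every
homogeneous ideal `I` containing `f`, `ℓ` divides `H I t` for all large `t`
(`exists_dvd_hilbertFn`). Applied to `I = (f)` it says that `ℓ` divides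
`C(t + d + n, n) - C(t + n, n)` for all large `t`. For `t + d = ℓ ^ N` this number is congruent to
`C(n, n) - C(n - d, n) = 1` modulo `ℓ`, since `1 ≤ d ≤ n`: a contradiction.

The divisibility is proved by Noetherian induction on `I`, replacing coherent sheaves and their
Euler characteristics by ideals and their Hilbert functions.

* If `I` is not prime, pick a homogeneous `a ∉ I` of degree `s` with `(I : a) ≠ I`; then
  `H I (t + s) = H (I + (a)) (t + s) + H (I : a) t` (`hilbertFn_add`), and both ideals on the right
  are larger.
* If `I = p` is prime and some `xᵢ ∉ p`, let `F = k(xⱼ / xᵢ)` be the function field of the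
  projective variety `V(p)` and `K` the algebraic closure of `k` in `F`, a finite extension of `k`.
  Let `a₁, …, aₑ` and `h` be homogeneous of the same degree such that the `aⱼ / h` form a `k`-basis
  of `K`. The image of `(a₁, …, aₑ)` in `S ⧸ p` is, in each degree, `h` times a `K`-vector space,
  so `H p - H (p + (a₁, …, aₑ))` is divisible by `[K : k]` in large degrees
  (`finrank_dvd_hilbertFn_sub`). It remains to see that `ℓ ∣ [K : k]`, i.e. that `f` has a
  nontrivial zero in `K`.

The affine variety over `K` with coordinate ring `K[xⱼ / xᵢ] ⊆ F` is geometrically integral because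
`K` is perfect and algebraically closed in `F`. Its Weil restriction to `k` is a geometrically
integral variety, becoming over the algebraic closure a product of the conjugates of the given one,
so it has a `k`-point because `k` is pseudo-algebraically closed. Such a point is a `K`-point of the
original variety (`exists_zero_of_algClosedIn`), and hence a zero of `f` in `K` with `i`-th
coordinate `1`.
-/

/-!
Let `k` be a perfect pseudo-algebraically closed field.  Every hypersurface `X ⊆ ℙⁿ_k` of
degree `d ≤ n` has index `1` over `k`: the gcd of the degrees `[k(x):k]` of the closed
points of `X` equals `1`.  The degrees of closed points of `X` are exactly the degrees
`[L:k]` of finite extensions `L/k` in which the defining homogeneous polynomial has a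
nontrivial zero, and `gcd S = 1` is expressed by saying that `S` generates the group `ℤ`.
-/

open AlgebraicGeometry CategoryTheory

section Points

open scoped TensorProduct

/-! ### Rational points over a pseudo-algebraically closed field -/

/-- Base change of a coordinate ring: `C ⊗ (K[x] ⧸ I)` is `C[x]` modulo the ideal generated by `I`. -/
noncomputable def tensorQuotientMvPolynomialEquiv (K C : Type*) [Field K] [Field C] [Algebra K C]
    {ι : Type*} (I : Ideal (MvPolynomial ι K)) :
    C ⊗[K] (MvPolynomial ι K ⧸ I) ≃+*
      MvPolynomial ι C ⧸ I.map (MvPolynomial.map (σ := ι) (algebraMap K C)) :=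
  (Algebra.TensorProduct.tensorQuotientEquiv (R := K) C _ C I).toRingEquiv.trans <|
    Ideal.quotientEquiv _ _ (MvPolynomial.algebraTensorAlgEquiv K C).toRingEquiv <| by
      symm
      have : I.map (MvPolynomial.map (σ := ι) (algebraMap K C)) =
        I.map (((MvPolynomial.algebraTensorAlgEquiv (σ := ι) K C).toRingEquiv : _ →+* _).comp
          (Algebra.TensorProduct.includeRight (A := C) (R := K) : _ →ₐ[K] _).toRingHom) := by
        congr 1
        refine RingHom.ext fun x => ?_
        simp
      rw [this]
      exact (Ideal.map_map _ _)

/-- The affine form of pseudo-algebraic closedness: an ideal of `k[x]` that generates a prime ideal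
over the algebraic closure has a zero in `k`. This is the only place where schemes are used. -/
lemma exists_zero_of_isPseudoAlgebraicallyClosed {k : Type} [Field k]
    (hPAC : IsPseudoAlgebraicallyClosed k) {ι : Type} [Finite ι]
    (I : Ideal (MvPolynomial ι k))
    (hI : (I.map (MvPolynomial.map (σ := ι) (algebraMap k (AlgebraicClosure k)))).IsPrime) :
    ∃ z : ι → k, ∀ g ∈ I, MvPolynomial.eval z g = 0 := by
  let W := MvPolynomial ι k ⧸ I
  have hdom : IsDomain (W ⊗[k] AlgebraicClosure k) :=
    ((Algebra.TensorProduct.comm k W (AlgebraicClosure k)).toRingEquiv.trans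
      (tensorQuotientMvPolynomialEquiv k (AlgebraicClosure k) I)).toMulEquiv.isDomain
  have hft : (algebraMap k W).FiniteType := RingHom.finiteType_algebraMap.mpr inferInstance
  have : Nonempty ↥(Limits.pullback (Spec.map (CommRingCat.ofHom (algebraMap k W)))
      (Spec.map (CommRingCat.ofHom (algebraMap k (AlgebraicClosure k))))) :=
    ⟨(pullbackSpecIso k W (AlgebraicClosure k)).inv (Classical.arbitrary _)⟩
  obtain ⟨s, hs⟩ := hPAC (Spec (CommRingCat.of W)) (Spec.map (CommRingCat.ofHom (algebraMap k W)))
    ((HasRingHomProperty.Spec_iff (P := @LocallyOfFiniteType)).mpr hft) inferInstance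
    (isIntegral_of_isOpenImmersion (pullbackSpecIso k W (AlgebraicClosure k)).hom)
  obtain ⟨φ, rfl⟩ := Spec.map_surjective s
  rw [← Spec.map_comp, ← Spec.map_id] at hs
  have hφ := Spec.map_injective hs
  have hφ' : φ.hom.comp (algebraMap k W) = RingHom.id k := by
    have := congrArg CommRingCat.Hom.hom hφ
    simpa using this
  refine ⟨fun i => φ.hom (Ideal.Quotient.mk I (MvPolynomial.X i)), fun g hg => ?_⟩
  have key : (φ.hom.comp (Ideal.Quotient.mk I)) =
    MvPolynomial.eval (fun i => φ.hom (Ideal.Quotient.mk I (MvPolynomial.X i))) := by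
    apply MvPolynomial.ringHom_ext
    · intro r
      simpa using! congrArg (fun f => f r) hφ'
    · intro i; simp
  rw [← key]
  simp [Ideal.Quotient.eq_zero_iff_mem.mpr hg]

/-! ### Products over an algebraically closed field -/

/-- A product of integral schemes over an algebraically closed field is integral. If `x * y = 0` in
`A ⊗ B`, every specialization `A → C` kills `x` or `y` in `B`. So the product of a coordinate of `x`
and a coordinate of `y` in a `C`-basis of `B` lies in every maximal ideal of `A`, hence vanishes. -/
lemma isDomain_tensorProduct_of_isAlgClosed (C A B : Type*) [Field C] [IsAlgClosed C]
    [CommRing A] [IsDomain A] [Algebra C A] [Algebra.FiniteType C A]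
    [CommRing B] [IsDomain B] [Algebra C B] : IsDomain (A ⊗[C] B) := by
  have : Nontrivial (A ⊗[C] B) := inferInstance
  suffices NoZeroDivisors (A ⊗[C] B) from NoZeroDivisors.to_isDomain _
  let b := Module.Free.chooseBasis C B
  let bA := Algebra.TensorProduct.basis A b
  -- Nullstellensatz: the maximal ideals of `A` are the kernels of the `C`-points.
  have hmax : ∀ M : Ideal A, M.IsMaximal → ∃ φ : A →ₐ[C] C, RingHom.ker φ = M := by
    intro M hM
    let := Ideal.Quotient.field M
    have hfin : Module.Finite C (A ⧸ M) := finite_of_finite_type_of_isJacobsonRing C (A ⧸ M)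
    have hbij := IsAlgClosed.algebraMap_bijective_of_isIntegral (k := C) (K := A ⧸ M)
    let e := AlgEquiv.ofBijective (Algebra.ofId C (A ⧸ M)) hbij
    refine ⟨(e.symm : (A ⧸ M) →ₐ[C] C).comp (Ideal.Quotient.mkₐ C M), ?_⟩
    ext x
    simp [RingHom.mem_ker, Ideal.Quotient.eq_zero_iff_mem]
  have hspec : ∀ (φ : A →ₐ[C] C) (x : A ⊗[C] B) (i),
      b.repr (Algebra.TensorProduct.lift (Algebra.ofId C B |>.comp φ) (AlgHom.id C B)
        (fun _ _ => Commute.all _ _) x) i = φ (bA.repr x i) := by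
    intro φ x i
    induction x with
    | zero => simp
    | add x y hx hy => simp [hx, hy]
    | tmul a y =>
      simp only [Algebra.TensorProduct.lift_tmul, AlgHom.comp_apply, Algebra.ofId_apply,
        ← Algebra.smul_def]
      simp [bA]
  refine ⟨fun {x y} hxy => ?_⟩
  by_contra! h
  obtain ⟨i, hi⟩ : ∃ i, bA.repr x i ≠ 0 := by
    by_contra! h0
    exact h.1 (bA.repr.injective (Finsupp.ext fun i => by simp [h0 i]))
  obtain ⟨j, hj⟩ : ∃ i, bA.repr y i ≠ 0 := by
    by_contra! h0
    exact h.2 (bA.repr.injective (Finsupp.ext fun i => by simp [h0 i]))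
  apply mul_ne_zero hi hj
  have hJ : (⊥ : Ideal A).jacobson = ⊥ :=
    (isJacobsonRing_of_finiteType (A := C) (B := A)).out (Ideal.IsPrime.isRadical inferInstance)
  rw [← Ideal.mem_bot, ← hJ, Ideal.jacobson, Ideal.mem_sInf]
  rintro M ⟨-, hM⟩
  obtain ⟨φ, rfl⟩ := hmax M hM
  rw [RingHom.mem_ker, map_mul, ← hspec, ← hspec]
  have := congrArg (Algebra.TensorProduct.lift (Algebra.ofId C B |>.comp φ) (AlgHom.id C B)
        (fun _ _ => Commute.all _ _)) hxy
  rw [map_mul, map_zero, mul_eq_zero] at this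
  rcases this with h | h <;> simp [h]

open MvPolynomial in
/-- The ideal of a finite product of integral affine varieties over an algebraically closed field
is prime: the sum of the ideals `Q a`, each in its own set of variables `{a} × ι`. -/
lemma isPrime_iSup_map_rename {C : Type*} [Field C] [IsAlgClosed C] {ι : Type*} [Finite ι]
    {α : Type*} [Finite α] (Q : α → Ideal (MvPolynomial ι C)) (hQ : ∀ a, (Q a).IsPrime) :
    (⨆ a, (Q a).map (rename (R := C) (fun i : ι => (a, i)))).IsPrime := by
  revert Q
  induction α using Finite.induction_empty_option with
  | @of_equiv α β e ih =>
    intro Q hQ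
    have := ih (fun a => Q (e a)) (fun a => hQ _)
    have h2 := Ideal.map_isPrime_of_equiv (renameEquiv C (e.prodCongr (Equiv.refl ι)))
      (I := ⨆ a, (Q (e a)).map (rename (R := C) (fun i : ι => (a, i))))
    have h3 : (⨆ a, (Q (e a)).map (rename (R := C) (fun i : ι => (a, i)))).map
        (rename (R := C) (e.prodCongr (Equiv.refl ι))) =
        ⨆ a, (Q a).map (rename (R := C) (fun i : ι => (a, i))) := by
      rw [Ideal.map_iSup, ← e.iSup_comp]
      refine iSup_congr fun a => ?_
      rw [Ideal.map_mapₐ]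
      congr 1
      ext i
      simp
    exact h3 ▸ h2
  | h_empty =>
    intro Q hQ
    rw [iSup_of_empty]
    exact Ideal.isPrime_bot
  | @h_option α _ ih =>
    intro Q hQ
    set S := (⨆ a, (Q a).map (rename (R := C) (fun i : ι => (a, i)))) with hS
    set P := (⨆ a : α, (Q (some a)).map (rename (R := C) (fun i : ι => (a, i)))) with hP
    have hPp : P.IsPrime := ih (fun a => Q (some a)) (fun a => hQ _)
    have hQ0 := hQ none
    have hdom := isDomain_tensorProduct_of_isAlgClosed C (MvPolynomial (α × ι) C ⧸ P)
      (MvPolynomial ι C ⧸ Q none)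
    -- `ψ` exhibits the coordinate ring of the product as a tensor product; `θ` is its inverse.
    let ψ : MvPolynomial (Option α × ι) C →ₐ[C]
        (MvPolynomial (α × ι) C ⧸ P) ⊗[C] (MvPolynomial ι C ⧸ Q none) :=
      aeval (R := C) (fun x : Option α × ι => x.1.elim
        ((1 : MvPolynomial (α × ι) C ⧸ P) ⊗ₜ[C] Ideal.Quotient.mk (Q none) (X x.2))
        (fun a => Ideal.Quotient.mk P (X (a, x.2)) ⊗ₜ[C] (1 : MvPolynomial ι C ⧸ Q none)))
    have hsome : ∀ a, ψ.comp (rename (fun i : ι => (some a, i))) =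
        (Algebra.TensorProduct.includeLeft.comp (Ideal.Quotient.mkₐ C P)).comp
          (rename (fun i : ι => (a, i))) := by
      intro a
      ext i
      simp [ψ]
    have hnone : ψ.comp (rename (fun i : ι => (none, i))) =
        (Algebra.TensorProduct.includeRight.comp (Ideal.Quotient.mkₐ C (Q none))) := by
      ext i
      simp [ψ]
    have hker1 : S ≤ RingHom.ker ψ := by
      refine iSup_le fun a => ?_
      rw [Ideal.map_le_iff_le_comap]
      intro g hg
      rw [Ideal.mem_comap, RingHom.mem_ker]
      cases a with
      | none =>
        have := DFunLike.congr_fun hnone g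
        simp only [AlgHom.comp_apply] at this
        rw [this]
        simp [Ideal.Quotient.eq_zero_iff_mem.mpr hg]
      | some a =>
        have := DFunLike.congr_fun (hsome a) g
        simp only [AlgHom.comp_apply] at this
        rw [this]
        have hm : rename (fun i : ι => (a, i)) g ∈ P :=
          Ideal.mem_iSup_of_mem a (Ideal.mem_map_of_mem _ hg)
        simp [Ideal.Quotient.eq_zero_iff_mem.mpr hm]
    have hPS : P ≤ RingHom.ker ((Ideal.Quotient.mkₐ C S).comp (rename (Prod.map some id))) := by
      refine iSup_le fun a => ?_
      rw [Ideal.map_le_iff_le_comap]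
      intro g hg
      rw [Ideal.mem_comap, RingHom.mem_ker, AlgHom.comp_apply, rename_rename]
      exact Ideal.Quotient.eq_zero_iff_mem.mpr
        (Ideal.mem_iSup_of_mem (some a) (Ideal.mem_map_of_mem (rename (fun i => (some a, i))) hg))
    have hQS : Q none ≤ RingHom.ker ((Ideal.Quotient.mkₐ C S).comp
        (rename (fun i : ι => ((none : Option α), i)))) := by
      intro g hg
      rw [RingHom.mem_ker, AlgHom.comp_apply]
      exact Ideal.Quotient.eq_zero_iff_mem.mpr
        (Ideal.mem_iSup_of_mem none (Ideal.mem_map_of_mem (rename (fun i => (none, i))) hg))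
    let θ : (MvPolynomial (α × ι) C ⧸ P) ⊗[C] (MvPolynomial ι C ⧸ Q none) →ₐ[C]
        MvPolynomial (Option α × ι) C ⧸ S := Algebra.TensorProduct.lift
      (Ideal.Quotient.liftₐ P _ hPS) (Ideal.Quotient.liftₐ (Q none) _ hQS)
      (fun _ _ => Commute.all _ _)
    have hθ : θ.comp ψ = Ideal.Quotient.mkₐ C S := by
      ext ⟨a, i⟩
      cases a with
      | none =>
        simp only [ψ, θ, AlgHom.comp_apply, aeval_X, Option.elim,
          Algebra.TensorProduct.lift_tmul, map_one, one_mul]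
        exact (Ideal.Quotient.lift_mk _ _ _).trans (by simp)
      | some a =>
        simp only [ψ, θ, AlgHom.comp_apply, aeval_X, Option.elim,
          Algebra.TensorProduct.lift_tmul, map_one, mul_one]
        exact (Ideal.Quotient.lift_mk _ _ _).trans (by simp)
    have : S = RingHom.ker ψ := by
      refine le_antisymm hker1 fun g hg => ?_
      rw [RingHom.mem_ker] at hg
      have := DFunLike.congr_fun hθ g
      rw [AlgHom.comp_apply, hg, map_zero] at this
      exact Ideal.Quotient.eq_zero_iff_mem.mp this.symm
    rw [this]
    exact RingHom.ker_isPrime _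

/-! ### Weil restriction -/

section WeilRestriction

open MvPolynomial

/-- The coordinates over `k`, in a `k`-basis `b` of `K`, of a polynomial with coefficients in `K`. -/
lemma MvPolynomial.exists_coordinates {k K : Type*} [Field k] [Field K] [Algebra k K] {β : Type*} [Fintype β]
    (b : Module.Basis β k K) {τ : Type*} (G : MvPolynomial τ K) :
    ∃ c : β → MvPolynomial τ k, G = ∑ j, C (b j) * map (algebraMap k K) (c j) := by
  induction G using MvPolynomial.induction_on' with
  | monomial u a =>
    refine ⟨fun j => monomial u (b.repr a j), ?_⟩
    simp only [map_monomial, C_mul_monomial, ← map_sum]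
    congr 1
    conv_lhs => rw [← b.sum_repr a]
    exact Finset.sum_congr rfl fun j _ => by rw [Algebra.smul_def, mul_comm]
  | add p q hp hq =>
    obtain ⟨c, hc⟩ := hp
    obtain ⟨c', hc'⟩ := hq
    refine ⟨c + c', ?_⟩
    conv_lhs => rw [hc, hc']
    simp [mul_add, Finset.sum_add_distrib]

/-- Weil restriction of the affine variety `V(I)` along a finite separable extension `K / k`: if all
conjugates of `I` are prime over the algebraically closed field `Ω`, then there is an ideal `J` over
`k` that generates a prime ideal over `Ω` and whose `k`-points yield `K`-points of `I`. -/
lemma exists_weilRestriction {k K Ω : Type*} [Field k] [Field K] [Field Ω] [IsAlgClosed Ω] [Algebra k K] [Algebra k Ω]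
    [FiniteDimensional k K] [Algebra.IsSeparable k K] {ι : Type} [Finite ι]
    (I : Ideal (MvPolynomial ι K))
    (hI : ∀ σ : K →ₐ[k] Ω, (I.map (map (σ := ι) (σ : K →+* Ω))).IsPrime) :
    ∃ J : Ideal (MvPolynomial (Fin (Module.finrank k K) × ι) k),
      (J.map (map (σ := Fin (Module.finrank k K) × ι) (algebraMap k Ω))).IsPrime ∧
      ∀ w : Fin (Module.finrank k K) × ι → k, (∀ h ∈ J, eval w h = 0) →
        ∃ z : ι → K, ∀ g ∈ I, eval z g = 0 := by
  classical
  let b := Module.finBasis k K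
  obtain ⟨e⟩ : Nonempty (Fin (Module.finrank k K) ≃ (K →ₐ[k] Ω)) := by
    rw [← Fintype.card_eq]
    simp [AlgHom.card]
  let M : Matrix (Fin (Module.finrank k K)) (Fin (Module.finrank k K)) Ω := fun a j => e a (b j)
  have hM : IsUnit M.det := by
    have h1 := Algebra.discr_eq_det_embeddingsMatrixReindex_pow_two k Ω b e
    have h2 : Algebra.embeddingsMatrixReindex k Ω b e = M.transpose := by
      ext i j; simp only [Algebra.embeddingsMatrixReindex, M]; rfl
    rw [h2, Matrix.det_transpose] at h1
    have h3 := (Algebra.discr_isUnit_of_basis k b).map (algebraMap k Ω)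
    rw [h1] at h3
    exact (isUnit_pow_iff two_ne_zero).mp h3
  -- Substitute `xᵢ = ∑ j, b j * x (j, i)`; `c g` are the coordinates of the result.
  let sub : MvPolynomial ι K →ₐ[K] MvPolynomial (Fin (Module.finrank k K) × ι) K :=
    aeval (fun i => ∑ j, C (b j) * X (j, i))
  choose c hc using fun g => MvPolynomial.exists_coordinates b (sub g)
  -- Over `Ω`, the invertible matrix `M` turns the coordinates `c g` into the conjugates of `g`.
  let lin (A : Matrix (Fin (Module.finrank k K)) (Fin (Module.finrank k K)) Ω) :
    MvPolynomial (Fin (Module.finrank k K) × ι) Ω →ₐ[Ω]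
      MvPolynomial (Fin (Module.finrank k K) × ι) Ω :=
      aeval (fun x => ∑ j, C (A x.1 j) * X (j, x.2))
  have hlin : ∀ A B, A * B = 1 → (lin B).comp (lin A) = AlgHom.id _ _ := by
    intro A B hAB
    ext ⟨a, i⟩ : 1
    simp only [lin, AlgHom.comp_apply, aeval_X, map_sum, map_mul, algHom_C, AlgHom.id_apply]
    simp only [algebraMap_eq, Finset.mul_sum]
    rw [Finset.sum_comm]
    simp only [← mul_assoc, ← C_mul, ← Finset.sum_mul, ← map_sum, ← Matrix.mul_apply, hAB, Matrix.one_apply]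
    simp
  let Φ := AlgEquiv.ofAlgHom (lin M) (lin M⁻¹) (hlin _ _ (Matrix.nonsing_inv_mul _ hM))
    (hlin _ _ (Matrix.mul_nonsing_inv _ hM))
  have hkey : ∀ a (g : MvPolynomial ι K), lin M (rename (fun i => (a, i)) (map (e a : K →+* Ω) g)) =
      ∑ j, C (M a j) * map (algebraMap k Ω) (c g j) := by
    intro a g
    have h1 : lin M (rename (fun i => (a, i)) (map (e a : K →+* Ω) g)) = map (e a : K →+* Ω) (sub g) := by
      induction g using MvPolynomial.induction_on with
      | C x => simp [sub, algHom_C]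
      | add p q hp hq => simp [hp, hq]
      | mul_X p i hp =>
        simp only [map_mul, hp]
        congr 1
        simp [sub, lin, M]
    rw [h1, hc g]
    simp only [map_sum, map_mul, map_C, map_map]
    refine Finset.sum_congr rfl fun j _ => ?_
    congr 2
    exact congrArg map (e a).comp_algebraMap
  let J : Ideal (MvPolynomial (Fin (Module.finrank k K) × ι) k) :=
    Ideal.span {h | ∃ g ∈ I, ∃ j, h = c g j}
  have hJmem : ∀ g ∈ I, ∀ j, c g j ∈ J := fun g hg j => Ideal.subset_span ⟨g, hg, j, rfl⟩
  refine ⟨J, ?_, ?_⟩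
  · have hprime := isPrime_iSup_map_rename
      (fun a => I.map (map (σ := ι) (e a : K →+* Ω))) (fun a => hI (e a))
    have h2 := Ideal.map_isPrime_of_equiv Φ (I := ⨆ a, (I.map (map (σ := ι) (e a : K →+* Ω))).map
        (rename (R := Ω) (fun i : ι => (a, i))))
    suffices h3 : (⨆ a, (I.map (map (σ := ι) (e a : K →+* Ω))).map
        (rename (R := Ω) (fun i : ι => (a, i)))).map (lin M) =
        J.map (map (σ := Fin (Module.finrank k K) × ι) (algebraMap k Ω)) from h3 ▸ h2
    apply le_antisymm
    · rw [Ideal.map_le_iff_le_comap]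
      refine iSup_le fun a => ?_
      rw [Ideal.map_le_iff_le_comap, Ideal.map_le_iff_le_comap]
      intro g hg
      simp only [Ideal.mem_comap]
      rw [hkey]
      exact Ideal.sum_mem _ fun j _ => Ideal.mul_mem_left _ _ (Ideal.mem_map_of_mem _ (hJmem g hg j))
    · rw [Ideal.map_le_iff_le_comap, Ideal.span_le]
      rintro _ ⟨g, hg, j, rfl⟩
      simp only [Ideal.coe_comap, Set.mem_preimage, SetLike.mem_coe]
      have : map (algebraMap k Ω) (c g j) = ∑ a, C (M⁻¹ j a) *
          lin M (rename (fun i => (a, i)) (map (e a : K →+* Ω) g)) := by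
        simp only [hkey, Finset.mul_sum]
        rw [Finset.sum_comm]
        simp only [← mul_assoc, ← C_mul, ← Finset.sum_mul, ← map_sum, ← Matrix.mul_apply,
          Matrix.nonsing_inv_mul _ hM, Matrix.one_apply]
        simp
      rw [this]
      refine Ideal.sum_mem _ fun a _ => Ideal.mul_mem_left _ _ (Ideal.mem_map_of_mem _ ?_)
      exact Ideal.mem_iSup_of_mem a (Ideal.mem_map_of_mem _ (Ideal.mem_map_of_mem _ hg))
  · intro w hw
    refine ⟨fun i => ∑ j, b j * algebraMap k K (w (j, i)), fun g hg => ?_⟩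
    have h1 : ∀ g, eval (fun i => ∑ j, b j * algebraMap k K (w (j, i))) g =
        eval (fun x => algebraMap k K (w x)) (sub g) := by
      intro g
      clear hg
      induction g using MvPolynomial.induction_on with
      | C x => simp [sub, algHom_C]
      | add p q hp hq => simp [hp, hq]
      | mul_X p i hp =>
        simp only [map_mul, hp]
        congr 1
        simp [sub]
    rw [h1, hc g, map_sum]
    refine Finset.sum_eq_zero fun j _ => ?_
    rw [map_mul, MvPolynomial.eval_map]
    have : eval₂ (algebraMap k K) (fun x => algebraMap k K (w x)) (c g j) = algebraMap k K (eval w (c g j)) := by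
      exact (eval₂_comp_left (algebraMap k K) (RingHom.id k) w (c g j)).symm
    rw [this, hw _ (hJmem g hg j)]
    simp

end WeilRestriction

/-! ### Regular extensions -/

section Regular

open scoped IntermediateField
open Polynomial

/-- If `K` is algebraically closed in `F`, minimal polynomials over `K` remain minimal over `F`: the
coefficients of `minpoly F β` are integral over `K`. -/
lemma minpoly_eq_map_of_algClosedIn {K F E : Type*} [Field K] [Field F] [Field E] [Algebra K F]
    [Algebra K E] [Algebra F E] [IsScalarTower K F E]
    (h : ∀ x : F, IsIntegral K x → x ∈ (algebraMap K F).range) {β : E} (hβ : IsIntegral K β) :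
    minpoly F β = (minpoly K β).map (algebraMap K F) := by
  have h1 := integralClosure.mem_lifts_of_monic_of_dvd_map F (minpoly.monic hβ)
    (minpoly.monic hβ.tower_top) (minpoly.dvd_map_of_isScalarTower K F β)
  have h2 : minpoly F β ∈ lifts (algebraMap K F) := by
    rw [lifts_iff_coeff_lifts] at h1 ⊢
    intro m
    obtain ⟨y, hy⟩ := h1 m
    rw [← hy]
    exact h _ y.2
  obtain ⟨q, hq, hdeg, hmon⟩ := lifts_and_natDegree_eq_and_monic h2 (minpoly.monic hβ.tower_top)
  have h3 : minpoly K β ∣ q := by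
    apply minpoly.dvd
    rw [← aeval_map_algebraMap F, hq, minpoly.aeval]
  have h4 := minpoly.dvd_map_of_isScalarTower K F β
  refine (eq_of_monic_of_dvd_of_natDegree_le (minpoly.monic hβ.tower_top) ((minpoly.monic hβ).map _) h4 ?_).symm
  rw [natDegree_map, ← hdeg]
  exact natDegree_le_of_dvd h3 hmon.ne_zero

/-- If `K` is perfect and algebraically closed in `F`, then `F` is a regular extension of `K`. Inside
an algebraic closure of `F`, a finite subextension `K(β)` of `C` is linearly disjoint from `F`,
because `β` has the same degree over `K` and over `F`. -/
lemma isDomain_tensorProduct_of_algClosedIn (K C F : Type*) [Field K] [Field C] [Field F]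
    [PerfectField K] [Algebra K F] [Algebra K C] [Algebra.IsAlgebraic K C]
    (h : ∀ x : F, IsIntegral K x → x ∈ (algebraMap K F).range) : IsDomain (C ⊗[K] F) := by
  let Ω := AlgebraicClosure F
  let φ : C →ₐ[K] Ω := IsAlgClosed.lift
  let A : IntermediateField K Ω := φ.fieldRange
  have hAalg : ∀ a ∈ A, IsIntegral K a := by
    rintro _ ⟨x, rfl⟩
    exact (Algebra.IsIntegral.isIntegral (R := K) x).map φ
  suffices H : A.LinearDisjoint F by
    have := H.isDomain
    have e : C ≃ₐ[K] A := AlgEquiv.ofInjectiveField φ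
    exact (Algebra.TensorProduct.congr e (AlgEquiv.refl (A₁ := F) (R := K))).toMulEquiv.isDomain
  let b := Module.Free.chooseBasis K F
  refine IntermediateField.LinearDisjoint.of_basis_right' b ?_
  rw [linearIndependent_iff']
  intro s g hg i hi
  let N : IntermediateField K Ω := IntermediateField.adjoin K (Set.range fun i : s => (g i : Ω))
  have : FiniteDimensional K N := by
    apply IntermediateField.finiteDimensional_adjoin
    rintro _ ⟨i, rfl⟩
    exact hAalg _ (g i).2
  obtain ⟨β, hβ⟩ := Field.exists_primitive_element K N
  have hβint : IsIntegral K (β : Ω) := by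
    have := Algebra.IsIntegral.isIntegral (R := K) β
    exact this.map N.val
  have hq : ∀ i : s, ∃ q : K[X], q.natDegree < (minpoly K (β : Ω)).natDegree ∧ aeval (β : Ω) q = (g i : Ω) := by
    intro i
    have hiN : (g i : Ω) ∈ N := IntermediateField.subset_adjoin _ _ ⟨i, rfl⟩
    have : (⟨_, hiN⟩ : N) ∈ K⟮β⟯ := by rw [hβ]; trivial
    rw [← IntermediateField.mem_toSubalgebra, IntermediateField.adjoin_simple_toSubalgebra_of_isAlgebraic
      (Algebra.IsAlgebraic.isAlgebraic β), Algebra.adjoin_singleton_eq_range_aeval] at this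
    obtain ⟨q, hq⟩ := this
    have hq' : aeval (β : Ω) q = (g i : Ω) := by
      have := congrArg (algebraMap N Ω) hq
      exact (aeval_algebraMap_apply Ω β q).trans this
    refine ⟨q %ₘ minpoly K (β : Ω), natDegree_modByMonic_lt _ (minpoly.monic hβint) (minpoly.ne_one K _), ?_⟩
    rw [modByMonic_eq_sub_mul_div, map_sub, map_mul, minpoly.aeval, zero_mul, sub_zero, hq']
  choose q hqdeg hq using hq
  -- Its value at `β` is zero, and its degree is less than that of `β` over `F`.
  have hzero : ∑ i : s, Polynomial.C (b i) * (q i).map (algebraMap K F) = 0 := by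
    by_contra hne
    have h1 : aeval (β : Ω) (∑ i : s, Polynomial.C (b i) * (q i).map (algebraMap K F)) = 0 := by
      rw [← hg, map_sum, ← Finset.sum_coe_sort s]
      refine Finset.sum_congr rfl fun i _ => ?_
      rw [map_mul, aeval_C, aeval_map_algebraMap, hq, mul_comm]
      rfl
    have h2 := natDegree_le_of_dvd (minpoly.dvd F (β : Ω) h1) hne
    rw [minpoly_eq_map_of_algClosedIn h hβint, natDegree_map] at h2
    have h3 : (∑ i : s, Polynomial.C (b i) * (q i).map (algebraMap K F)).natDegree ≤
        (minpoly K (β : Ω)).natDegree - 1 := by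
      refine natDegree_sum_le_of_forall_le _ _ fun i _ => ?_
      refine (natDegree_C_mul_le _ _).trans ?_
      rw [natDegree_map]
      have := hqdeg i
      omega
    have := minpoly.natDegree_pos hβint
    omega
  have hqz : ∀ m, ∀ i : s, (q i).coeff m = 0 := by
    intro m
    have := congrArg (fun p => coeff p m) hzero
    simp only [finsetSum_coeff, coeff_C_mul, coeff_map, coeff_zero] at this
    have hb := b.linearIndependent.comp (fun i : s => (i : Module.Free.ChooseBasisIndex K F)) Subtype.val_injective
    rw [Fintype.linearIndependent_iff] at hb
    refine hb (fun i => (q i).coeff m) ?_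
    rw [← this]
    exact Finset.sum_congr rfl fun i _ => by rw [Algebra.smul_def, mul_comm]; rfl
  have : (g i : Ω) = 0 := by
    rw [← hq ⟨i, hi⟩, show q ⟨i, hi⟩ = 0 from Polynomial.ext fun m => by simpa using hqz m _, map_zero]
  exact_mod_cast this

end Regular

/-! ### Specialization to the field of constants -/

/-- The affine variety over `K` with generic point `y` is geometrically integral when `K` is algebraically
closed in the field `F` containing the coordinates of `y`. -/
lemma isPrime_map_ker_aeval {K C F : Type*} [Field K] [Field C] [Field F]
    [PerfectField K] [Algebra K F] [Algebra K C] [Algebra.IsAlgebraic K C]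
    (h : ∀ x : F, IsIntegral K x → x ∈ (algebraMap K F).range) {ι : Type*} (y : ι → F) :
    ((RingHom.ker (MvPolynomial.aeval (R := K) y)).map
      (MvPolynomial.map (σ := ι) (algebraMap K C))).IsPrime := by
  have hdom := isDomain_tensorProduct_of_algClosedIn K C F h
  let φ := Ideal.kerLiftAlg (MvPolynomial.aeval (R := K) y)
  have hφ : Function.Injective φ := Ideal.kerLiftAlg_injective _
  have hinj : Function.Injective (Algebra.TensorProduct.map (AlgHom.id K C) φ) :=
    Module.Flat.lTensor_preserves_injective_linearMap (M := C) φ.toLinearMap hφ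
  have : IsDomain (C ⊗[K] (MvPolynomial ι K ⧸ RingHom.ker (MvPolynomial.aeval (R := K) y))) :=
    hinj.isDomain (Algebra.TensorProduct.map (AlgHom.id K C) φ).toRingHom
  rw [← Ideal.Quotient.isDomain_iff_prime]
  exact (tensorQuotientMvPolynomialEquiv K C _).symm.toMulEquiv.isDomain

/-- A point `y` with coordinates in an extension `F` of `K` has a specialization with coordinates in `K`
when `K` is algebraically closed in `F` and finite over the pseudo-algebraically closed field `k`. -/
lemma exists_zero_of_algClosedIn {k : Type} [Field k] [PerfectField k]
    (hPAC : IsPseudoAlgebraicallyClosed k) {K F : Type*} [Field K] [Field F] [Algebra k K]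
    [Algebra K F] [FiniteDimensional k K]
    (h : ∀ x : F, IsIntegral K x → x ∈ (algebraMap K F).range) {ι : Type} [Finite ι] (y : ι → F) :
    ∃ z : ι → K, ∀ g : MvPolynomial ι K, MvPolynomial.aeval y g = 0 → MvPolynomial.eval z g = 0 := by
  have : PerfectField K := Algebra.IsAlgebraic.perfectField (K := k)
  obtain ⟨J, hJ, hz⟩ := exists_weilRestriction (k := k) (Ω := AlgebraicClosure k)
    (RingHom.ker (MvPolynomial.aeval (R := K) y)) (by
      intro σ
      let : Algebra K (AlgebraicClosure k) := σ.toRingHom.toAlgebra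
      have : IsScalarTower k K (AlgebraicClosure k) := IsScalarTower.of_algHom σ
      have : Algebra.IsAlgebraic K (AlgebraicClosure k) := Algebra.IsAlgebraic.tower_top (K := k) K
      exact isPrime_map_ker_aeval h y)
  obtain ⟨w, hw⟩ := exists_zero_of_isPseudoAlgebraicallyClosed hPAC J hJ
  exact hz w hw

end Points

open scoped IntermediateField.algebraAdjoinAdjoin in
/-- The algebraic closure of `k` in a finitely generated extension `E` is finite over `k`: elements of it
that are linearly independent over `k` remain so over the field generated by a transcendence
basis, over which `E` is finite. -/
lemma finiteDimensional_algebraicClosure (k E : Type*) [Field k] [Field E] [Algebra k E]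
    [Algebra.EssFiniteType k E] : FiniteDimensional k (algebraicClosure k E) := by
  obtain ⟨s, hs⟩ : ∃ s : Finset E, IsTranscendenceBasis k ((↑) : s → E) := by
    have ⟨s, hs⟩ := IntermediateField.fg_top k E
    have : Algebra.IsAlgebraic (Algebra.adjoin k (s : Set E)) E := by
      rw [← IntermediateField.isAlgebraic_adjoin_iff_top, hs, Algebra.isAlgebraic_iff_isIntegral]
      exact Algebra.isIntegral_of_surjective IntermediateField.topEquiv.surjective
    have ⟨t, hts, ht⟩ := exists_isTranscendenceBasis_subset (R := k) (s : Set E)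
    lift t to Finset E using s.finite_toSet.subset hts
    exact ⟨t, ht⟩
  have hfin : Module.Finite (IntermediateField.adjoin k (s : Set E)) E := by
    apply +allowSynthFailures Algebra.finite_of_essFiniteType_of_isAlgebraic
    · exact .of_comp k _ _
    · convert! hs.isAlgebraic_field <;> simp
  let b := Module.Free.chooseBasis k (algebraicClosure k E)
  have hind : LinearIndependent (Algebra.adjoin k (s : Set E)) (fun i => (b i : E)) := by
    rw [linearIndependent_iff']
    intro t g hg i hi
    have hP : ∀ i, ∃ P : MvPolynomial s k, MvPolynomial.aeval (fun x : s => (x : E)) P = g i := by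
      intro i
      have h1 : Algebra.adjoin k (s : Set E) =
          (MvPolynomial.aeval (R := k) (fun x : s => (x : E))).range := by
        rw [← Algebra.adjoin_range_eq_range_aeval]
        simp
      exact (h1 ▸ (g i).2 : (g i : E) ∈ (MvPolynomial.aeval (R := k) (fun x : s => (x : E))).range)
    choose P hP using hP
    have halg := hs.1.algebraicClosure
    rw [algebraicIndependent_iff] at halg
    have h0 := halg (∑ i ∈ t, MvPolynomial.C (b i) * MvPolynomial.map (algebraMap k _) (P i)) (by
      rw [← hg, map_sum]
      refine Finset.sum_congr rfl fun i _ => ?_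
      rw [map_mul, MvPolynomial.aeval_map_algebraMap, hP, MvPolynomial.aeval_C, mul_comm]
      rfl)
    have hPz : P i = 0 := by
      ext m
      have := congrArg (MvPolynomial.coeff m) h0
      simp only [MvPolynomial.coeff_sum, MvPolynomial.coeff_C_mul, MvPolynomial.coeff_map,
        MvPolynomial.coeff_zero] at this
      have hb := linearIndependent_iff'.mp b.linearIndependent t (fun i => (P i).coeff m) (by
        rw [← this]
        exact Finset.sum_congr rfl fun i _ => by rw [Algebra.smul_def, mul_comm]) i hi
      simpa using hb
    have := hP i
    rw [hPz, map_zero] at this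
    exact Subtype.ext this.symm
  have hind' : LinearIndependent (IntermediateField.adjoin k (s : Set E)) (fun i => (b i : E)) :=
    (LinearIndependent.iff_fractionRing (Algebra.adjoin k (s : Set E)) _).mp hind
  have := hind'.finite
  exact Module.Finite.of_basis b

/-! ### Hilbert functions -/

section Hilbert

variable {k A : Type*} [Field k] [CommRing A] [Algebra k A] (𝒜 : ℕ → Submodule k A)

/-- The degree-`t` part `I ∩ 𝒜 t` of an ideal `I`, as a `k`-subspace. -/
def gradedPart (I : Ideal A) (t : ℕ) : Submodule k A := I.restrictScalars k ⊓ 𝒜 t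

/-- The Hilbert function of `A ⧸ I`: the dimension of `𝒜 t` minus that of `I ∩ 𝒜 t`. -/
noncomputable def hilbertFn (I : Ideal A) (t : ℕ) : ℤ :=
  (Module.finrank k (𝒜 t) : ℤ) - Module.finrank k (gradedPart 𝒜 I t)

variable {𝒜}

lemma mem_gradedPart {I : Ideal A} {t : ℕ} {x : A} : x ∈ gradedPart 𝒜 I t ↔ x ∈ I ∧ x ∈ 𝒜 t :=
  Iff.rfl

lemma hilbertFn_eq_zero {I : Ideal A} {t : ℕ} (h : ∀ x ∈ 𝒜 t, x ∈ I) : hilbertFn 𝒜 I t = 0 := by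
  have : gradedPart 𝒜 I t = 𝒜 t := inf_eq_right.mpr h
  rw [hilbertFn, this, sub_self]

variable [GradedAlgebra 𝒜]

lemma isHomogeneous_colon {I : Ideal A} (hI : I.IsHomogeneous 𝒜) {a : A} {s : ℕ} (ha : a ∈ 𝒜 s) :
    (I.colon {a}).IsHomogeneous 𝒜 := by
  intro t x hx
  rw [Submodule.mem_colon_singleton, smul_eq_mul] at hx ⊢
  rw [← DirectSum.coe_decompose_mul_add_of_right_mem 𝒜 ha]
  exact hI _ hx

lemma gradedPart_sup_span {I : Ideal A} (hI : I.IsHomogeneous 𝒜) {a : A} {s : ℕ} (ha : a ∈ 𝒜 s)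
    (t : ℕ) : gradedPart 𝒜 (I ⊔ Ideal.span {a}) (t + s) =
      gradedPart 𝒜 I (t + s) ⊔ (𝒜 t).map (LinearMap.mulRight k a) := by
  apply le_antisymm
  · rintro x ⟨hx, hxt⟩
    obtain ⟨u, hu, v, hv, rfl⟩ := Submodule.mem_sup.mp hx
    obtain ⟨c, rfl⟩ := Ideal.mem_span_singleton'.mp hv
    rw [← DirectSum.decompose_of_mem_same 𝒜 hxt, DirectSum.decompose_add, DirectSum.add_apply,
      Submodule.coe_add, DirectSum.coe_decompose_mul_add_of_right_mem 𝒜 ha]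
    exact Submodule.add_mem_sup ⟨hI _ hu, SetLike.coe_mem _⟩ ⟨_, SetLike.coe_mem _, rfl⟩
  · refine sup_le (inf_le_inf_right _ fun x hx => Ideal.mem_sup_left hx) ?_
    rintro _ ⟨c, hc, rfl⟩
    exact ⟨Ideal.mem_sup_right (Ideal.mul_mem_left _ _ (Ideal.mem_span_singleton_self a)),
      SetLike.mul_mem_graded hc ha⟩

lemma gradedPart_inf_map_mulRight {I : Ideal A} {a : A} {s : ℕ} (ha : a ∈ 𝒜 s) (t : ℕ) :
    gradedPart 𝒜 I (t + s) ⊓ (𝒜 t).map (LinearMap.mulRight k a) =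
      (gradedPart 𝒜 (I.colon {a}) t).map (LinearMap.mulRight k a) := by
  apply le_antisymm
  · rintro _ ⟨hx, c, hc, rfl⟩
    exact ⟨c, ⟨Submodule.mem_colon_singleton.mpr hx.1, hc⟩, rfl⟩
  · rintro _ ⟨c, ⟨hc, hct⟩, rfl⟩
    exact ⟨⟨Submodule.mem_colon_singleton.mp hc, SetLike.mul_mem_graded hct ha⟩, c, hct, rfl⟩

variable [∀ t, FiniteDimensional k (𝒜 t)]

instance (I : Ideal A) (t : ℕ) : FiniteDimensional k (gradedPart 𝒜 I t) :=
  Submodule.finiteDimensional_of_le inf_le_right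

/-- Additivity of the Hilbert function along the exact sequence
`0 → A ⧸ (I : a) → A ⧸ I → A ⧸ (I + (a)) → 0`, whose first map is multiplication by `a`. -/
lemma hilbertFn_add [IsDomain A] {I : Ideal A} (hI : I.IsHomogeneous 𝒜) {a : A} {s : ℕ}
    (ha : a ∈ 𝒜 s) (ha0 : a ≠ 0) (t : ℕ) :
    hilbertFn 𝒜 I (t + s) =
      hilbertFn 𝒜 (I ⊔ Ideal.span {a}) (t + s) + hilbertFn 𝒜 (I.colon {a}) t := by
  have hinj : Function.Injective (LinearMap.mulRight k a) := mul_left_injective₀ ha0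
  have h := Submodule.finrank_sup_add_finrank_inf_eq (gradedPart 𝒜 I (t + s))
    ((𝒜 t).map (LinearMap.mulRight k a))
  rw [← gradedPart_sup_span hI ha, gradedPart_inf_map_mulRight ha,
    ← (Submodule.equivMapOfInjective _ hinj _).finrank_eq,
    ← (Submodule.equivMapOfInjective _ hinj _).finrank_eq] at h
  simp only [hilbertFn]
  omega

/-- For a homogeneous prime `p` and numerators `a j` with `a j / h` running over a `k`-basis of a field
`K` inside a field `Q` containing `A ⧸ p`, the degree `t + s` part of `p + (a) ⧸ p` is the
`K`-subspace of `Q` spanned by `h * 𝒜 t`, so its dimension over `k` is a multiple of `[K : k]`. -/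
lemma finrank_dvd_hilbertFn_sub {p : Ideal A} (hp : p.IsHomogeneous 𝒜)
    {Q K : Type*} [Field Q] [Algebra k Q] (π : A →ₐ[k] Q) (hπ : ∀ x, π x = 0 ↔ x ∈ p)
    [Field K] [Algebra k K] [Algebra K Q] [IsScalarTower k K Q]
    {β : Type*} [Fintype β] (b : Module.Basis β k K) (h : A) (a : β → A) {s : ℕ}
    (ha : ∀ j, a j ∈ 𝒜 s) (hab : ∀ j, π (a j) = algebraMap K Q (b j) * π h) (t : ℕ) :
    (Module.finrank k K : ℤ) ∣ hilbertFn 𝒜 p (t + s) -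
      hilbertFn 𝒜 (p ⊔ Ideal.span (Set.range a)) (t + s) := by
  classical
  set J := p ⊔ Ideal.span (Set.range a) with hJ
  let V : Set Q := {v | ∃ q ∈ 𝒜 t, v = π h * π q}
  let W := Submodule.span K V
  -- `π` maps the degree `t + s` part of `J` onto `W`, with kernel the degree `t + s` part of `p`.
  have hW : (gradedPart 𝒜 J (t + s)).map π.toLinearMap = W.restrictScalars k := by
    apply le_antisymm
    · rintro _ ⟨x, ⟨hx, hxt⟩, rfl⟩
      obtain ⟨u, hu, v, hv, rfl⟩ := Submodule.mem_sup.mp hx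
      obtain ⟨c, rfl⟩ := (Submodule.mem_span_range_iff_exists_fun A).mp hv
      have h1 : u + ∑ j, c j • a j = (DirectSum.decompose 𝒜 u (t + s) : A) +
          ∑ j, (DirectSum.decompose 𝒜 (c j) t : A) * a j := by
        conv_lhs => rw [← DirectSum.decompose_of_mem_same 𝒜 hxt]
        rw [DirectSum.decompose_add, DirectSum.add_apply, Submodule.coe_add,
          DirectSum.decompose_sum, DFinsupp.finsetSum_apply, Submodule.coe_sum]
        congr 1
        refine Finset.sum_congr rfl fun j _ => ?_
        rw [smul_eq_mul, DirectSum.coe_decompose_mul_add_of_right_mem 𝒜 (ha j)]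
      rw [h1, map_add, map_sum]
      simp only [AlgHom.toLinearMap_apply]
      rw [(hπ _).mpr (hp _ hu), zero_add]
      refine Submodule.sum_mem _ fun j _ => ?_
      rw [map_mul, hab, mul_comm, mul_assoc, ← Algebra.smul_def]
      exact Submodule.smul_mem W _ (Submodule.subset_span ⟨_, SetLike.coe_mem _, rfl⟩)
    · intro x hx
      obtain ⟨m, c, v, rfl⟩ := Submodule.mem_span_set'.mp (show x ∈ Submodule.span K V from hx)
      refine Submodule.sum_mem _ fun i _ => ?_
      obtain ⟨q, hq, hv⟩ := (v i).2
      refine ⟨∑ j, b.repr (c i) j • (a j * q), ?_, ?_⟩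
      · refine Submodule.sum_mem _ fun j _ => Submodule.smul_mem _ _
          (mem_gradedPart.mpr ⟨?_, ?_⟩)
        · exact Ideal.mul_mem_right _ _ (Ideal.mem_sup_right (Ideal.subset_span ⟨j, rfl⟩))
        · rw [mul_comm]
          exact SetLike.mul_mem_graded hq (ha j)
      · rw [hv]
        conv_rhs => rw [← b.sum_repr (c i), Finset.sum_smul]
        simp only [AlgHom.toLinearMap_apply, map_sum, map_smul, map_mul, hab]
        refine Finset.sum_congr rfl fun j _ => ?_
        rw [smul_assoc, Algebra.smul_def (b j), mul_assoc]
  have hle : gradedPart 𝒜 p (t + s) ≤ gradedPart 𝒜 J (t + s) :=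
    inf_le_inf_right _ fun x hx => Ideal.mem_sup_left hx
  have h1 := (π.toLinearMap.domRestrict (gradedPart 𝒜 J (t + s))).finrank_range_add_finrank_ker
  have h2 : LinearMap.ker (π.toLinearMap.domRestrict (gradedPart 𝒜 J (t + s))) =
      (gradedPart 𝒜 p (t + s)).comap (gradedPart 𝒜 J (t + s)).subtype := by
    ext ⟨x, hx⟩
    simp only [LinearMap.mem_ker, LinearMap.domRestrict_apply, AlgHom.toLinearMap_apply, hπ,
      Submodule.mem_comap, Submodule.subtype_apply, mem_gradedPart]
    exact ⟨fun h => ⟨h, hx.2⟩, fun h => h.1⟩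
  rw [LinearMap.range_domRestrict, hW, h2, (Submodule.comapSubtypeEquivOfLe hle).finrank_eq] at h1
  have h3 : Module.finrank k K * Module.finrank K W = Module.finrank k (W.restrictScalars k) :=
    Module.finrank_mul_finrank k K W
  refine ⟨Module.finrank K W, ?_⟩
  simp only [hilbertFn]
  rw [← h3] at h1
  zify at h1
  linarith

/-- The step of the Noetherian induction for an ideal that is not prime. -/
lemma exists_dvd_hilbertFn_of_not_isPrime [IsDomain A] {ℓ : ℤ} {I : Ideal A}
    (hI : I.IsHomogeneous 𝒜) (htop : I ≠ ⊤) (hprime : ¬ I.IsPrime)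
    (ih : ∀ J > I, J.IsHomogeneous 𝒜 → ∃ T, ∀ t ≥ T, ℓ ∣ hilbertFn 𝒜 J t) :
    ∃ T, ∀ t ≥ T, ℓ ∣ hilbertFn 𝒜 I t := by
  have : ∃ a b : A, SetLike.IsHomogeneousElem 𝒜 a ∧ a * b ∈ I ∧ a ∉ I ∧ b ∉ I := by
    by_contra! hcon
    exact hprime (hI.isPrime_of_homogeneous_mem_or_mem htop fun {x y} hx _ hxy => by
      by_contra! hn
      exact hn.2 (hcon x y hx hxy hn.1))
  obtain ⟨a, b, ⟨s, ha⟩, hab, haI, hbI⟩ := this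
  obtain ⟨T₁, h₁⟩ := ih (I ⊔ Ideal.span {a})
    (lt_of_le_of_ne le_sup_left fun h => haI (h ▸ Ideal.mem_sup_right (Ideal.mem_span_singleton_self a)))
    (hI.sup (Ideal.homogeneous_span 𝒜 _ (by rintro _ rfl; exact ⟨s, ha⟩)))
  obtain ⟨T₂, h₂⟩ := ih (I.colon {a})
    (lt_of_le_of_ne Ideal.le_colon fun h => hbI (h ▸ Submodule.mem_colon_singleton.mpr (by
      rwa [smul_eq_mul, mul_comm])))
    (isHomogeneous_colon hI ha)
  refine ⟨T₁ + T₂ + s, fun t ht => ?_⟩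
  obtain ⟨u, rfl⟩ : ∃ u, t = u + s := ⟨t - s, by omega⟩
  rw [hilbertFn_add hI ha (fun h => haI (h ▸ I.zero_mem))]
  exact dvd_add (h₁ _ (by omega)) (h₂ _ (by omega))

end Hilbert

/-! ### Binomial coefficients -/

section Numerics

lemma finrank_homogeneousSubmodule (k : Type*) [Field k] (n t : ℕ) :
    Module.finrank k (MvPolynomial.homogeneousSubmodule (Fin (n + 1)) k t) = (t + n).choose n := by
  have hset : {d : Fin (n + 1) →₀ ℕ | d.degree = t} =
      ((Finset.univ.finsuppAntidiag t : Finset (Fin (n + 1) →₀ ℕ)) : Set (Fin (n + 1) →₀ ℕ)) := by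
    ext d
    simp [Finset.mem_finsuppAntidiag, Finsupp.degree_eq_sum]
  rw [MvPolynomial.homogeneousSubmodule_eq_finsupp_supported, hset]
  rw [(AddMonoidAlgebra.supportedEquivFinsupp (R := k) (S := k) _).finrank_eq]
  rw [Module.finrank_finsupp_self, ← Nat.card_eq_fintype_card, Nat.card_coe_set_eq,
    Set.ncard_coe_finset, Finset.card_finsuppAntidiag_nat_eq_choose,
    Finset.card_univ, Fintype.card_fin, show n + 1 + t - 1 = t + n by omega]
  exact Nat.choose_symm_add

/-- The Vandermonde identity, all terms of which but one vanish modulo `ℓ`. -/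
lemma choose_prime_pow_add_modEq {ℓ : ℕ} (hℓ : ℓ.Prime) {N r n : ℕ} (hn : n < ℓ ^ N) :
    (ℓ ^ N + r).choose n ≡ r.choose n [MOD ℓ] := by
  rw [Nat.add_choose_eq, Finset.Nat.sum_antidiagonal_eq_sum_range_succ_mk,
    Finset.sum_range_succ']
  have : ∑ j ∈ Finset.range n, (ℓ ^ N).choose (j + 1) * r.choose (n - (j + 1)) ≡ 0 [MOD ℓ] := by
    rw [Nat.modEq_zero_iff_dvd]
    refine Finset.dvd_sum fun j hj => Dvd.dvd.mul_right ?_ _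
    rw [Finset.mem_range] at hj
    exact hℓ.dvd_choose_pow (by omega) (by omega)
  simpa only [Nat.choose_zero_right, one_mul, Nat.sub_zero, zero_add] using
    this.add_right (r.choose n)

end Numerics

/-! ### Homogeneous fractions -/

section Homogenization

variable {k Q : Type*} {σ : Type*} [Field k] [Field Q] [Algebra k Q]

lemma aeval_mul_const_of_isHomogeneous {f : MvPolynomial σ k} {d : ℕ} (hf : f.IsHomogeneous d)
    (y : σ → Q) (u : Q) :
    MvPolynomial.aeval (fun j => y j * u) f = MvPolynomial.aeval y f * u ^ d := by
  rw [MvPolynomial.aeval_def, MvPolynomial.aeval_def, MvPolynomial.eval₂_eq, MvPolynomial.eval₂_eq,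
    Finset.sum_mul]
  refine Finset.sum_congr rfl fun m hm => ?_
  have hd : ∑ i ∈ m.support, m i = d := by
    have := hf (MvPolynomial.mem_support_iff.mp hm)
    simpa [Finsupp.weight_apply, Finsupp.sum] using this
  rw [mul_assoc, ← hd, ← Finset.prod_pow_eq_pow_sum, ← Finset.prod_mul_distrib]
  simp only [mul_pow]

/-- A polynomial in the fractions `xⱼ / xᵢ` is, after multiplication by any large power of `xᵢ`, the
image of a homogeneous polynomial. -/
lemma exists_homogenization (π : MvPolynomial σ k →ₐ[k] Q) (i : σ)
    (hi : π (MvPolynomial.X i) ≠ 0) (r : MvPolynomial σ k) :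
    ∃ N₀, ∀ N ≥ N₀, ∃ R : MvPolynomial σ k, R.IsHomogeneous N ∧
      π R = MvPolynomial.aeval (fun j => π (MvPolynomial.X j) / π (MvPolynomial.X i)) r *
        π (MvPolynomial.X i) ^ N := by
  induction r using MvPolynomial.induction_on with
  | C c =>
    refine ⟨0, fun N _ => ⟨MvPolynomial.C c * MvPolynomial.X i ^ N, ?_, ?_⟩⟩
    · simpa using (MvPolynomial.isHomogeneous_C σ c).mul (MvPolynomial.isHomogeneous_X_pow i N)
    · rw [map_mul, map_pow, MvPolynomial.aeval_C, ← MvPolynomial.algebraMap_eq, AlgHom.commutes]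
  | add p q hp hq =>
    obtain ⟨M, hM⟩ := hp
    obtain ⟨M', hM'⟩ := hq
    refine ⟨max M M', fun N hN => ?_⟩
    obtain ⟨R, hR, hR'⟩ := hM N (le_trans (le_max_left _ _) hN)
    obtain ⟨T, hT, hT'⟩ := hM' N (le_trans (le_max_right _ _) hN)
    exact ⟨R + T, hR.add hT, by rw [map_add, hR', hT', map_add, add_mul]⟩
  | mul_X p j hp =>
    obtain ⟨M, hM⟩ := hp
    refine ⟨M + 1, fun N hN => ?_⟩
    obtain ⟨N, rfl⟩ := Nat.exists_eq_add_of_le' (show 1 ≤ N by omega)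
    obtain ⟨R, hR, hR'⟩ := hM N (by omega)
    refine ⟨R * MvPolynomial.X j, hR.mul (MvPolynomial.isHomogeneous_X k j), ?_⟩
    rw [map_mul, hR', map_mul, MvPolynomial.aeval_X, pow_succ]
    field_simp

lemma exists_homogeneous_fraction (π : MvPolynomial σ k →ₐ[k] Q) (i : σ)
    (hi : π (MvPolynomial.X i) ≠ 0) {c : Q} (hc : c ∈ IntermediateField.adjoin k
      (Set.range fun j => π (MvPolynomial.X j) / π (MvPolynomial.X i))) :
    ∃ (N : ℕ) (a h : MvPolynomial σ k), a.IsHomogeneous N ∧ h.IsHomogeneous N ∧ π h ≠ 0 ∧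
      π a = c * π h := by
  obtain ⟨r, s, rfl⟩ := (IntermediateField.mem_adjoin_range_iff _ _ _).mp hc
  by_cases hs : MvPolynomial.aeval (fun j => π (MvPolynomial.X j) / π (MvPolynomial.X i)) s = 0
  · exact ⟨0, 0, 1, MvPolynomial.isHomogeneous_zero _ _ _, MvPolynomial.isHomogeneous_one _ _,
      by simp, by simp [hs]⟩
  obtain ⟨M, hM⟩ := exists_homogenization π i hi r
  obtain ⟨M', hM'⟩ := exists_homogenization π i hi s
  obtain ⟨R, hR, hR'⟩ := hM (max M M') (le_max_left _ _)
  obtain ⟨T, hT, hT'⟩ := hM' (max M M') (le_max_right _ _)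
  refine ⟨_, R, T, hR, hT, ?_, ?_⟩
  · rw [hT']
    exact mul_ne_zero hs (pow_ne_zero _ hi)
  · rw [hR', hT', ← mul_assoc, div_mul_cancel₀ _ hs]

/-- Finitely many elements of the degree-zero function field `k(xⱼ / xᵢ)` are fractions with homogeneous
numerators and a common denominator. -/
lemma exists_common_denominator (π : MvPolynomial σ k →ₐ[k] Q) (i : σ)
    (hi : π (MvPolynomial.X i) ≠ 0) {β : Type*} [Fintype β] (c : β → Q)
    (hc : ∀ j, c j ∈ IntermediateField.adjoin k
      (Set.range fun j => π (MvPolynomial.X j) / π (MvPolynomial.X i))) :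
    ∃ (N : ℕ) (a : β → MvPolynomial σ k) (h : MvPolynomial σ k), (∀ j, (a j).IsHomogeneous N) ∧
      π h ≠ 0 ∧ ∀ j, π (a j) = c j * π h := by
  classical
  choose N a h ha hh hh0 hah using fun j => exists_homogeneous_fraction π i hi (hc j)
  refine ⟨∑ j, N j, fun j => a j * ∏ l ∈ Finset.univ.erase j, h l, ∏ l, h l, fun j => ?_, ?_,
    fun j => ?_⟩
  · rw [← Finset.add_sum_erase _ _ (Finset.mem_univ j)]
    exact (ha j).mul (MvPolynomial.IsHomogeneous.prod _ _ _ fun l _ => hh l)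
  · rw [map_prod]
    exact Finset.prod_ne_zero_iff.mpr fun l _ => hh0 l
  · rw [← Finset.mul_prod_erase _ _ (Finset.mem_univ j), map_mul, map_mul, hah, mul_assoc]

end Homogenization

/-! ### Divisibility of Hilbert functions -/

section Main

attribute [local instance] MvPolynomial.gradedAlgebra

instance finiteDimensional_homogeneousSubmodule (k : Type*) [Field k] (n t : ℕ) :
    FiniteDimensional k (MvPolynomial.homogeneousSubmodule (Fin n) k t) :=
  Module.Finite.iff_fg.mpr (MvPolynomial.homogeneousSubmodule_fg _ _ t)

/-- The field of constants `K` of the variety with homogeneous generic point `π`, i.e. the algebraic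
closure of `k` in the function field `k(xⱼ / xᵢ)`, is finite over `k`, and over it `f` has a
nontrivial zero. -/
lemma exists_residueField {k : Type} [Field k] [PerfectField k]
    (hPAC : IsPseudoAlgebraicallyClosed k) {n d : ℕ} {f : MvPolynomial (Fin n) k}
    (hhom : f.IsHomogeneous d) {Q : Type} [Field Q] [Algebra k Q]
    (π : MvPolynomial (Fin n) k →ₐ[k] Q) (hπf : π f = 0) {i : Fin n}
    (hi : π (MvPolynomial.X i) ≠ 0) :
    ∃ (K : Type) (_ : Field K) (_ : Algebra k K) (_ : Algebra K Q) (_ : IsScalarTower k K Q)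
      (_ : FiniteDimensional k K),
      (∀ c : K, algebraMap K Q c ∈ IntermediateField.adjoin k
        (Set.range fun j => π (MvPolynomial.X j) / π (MvPolynomial.X i))) ∧
      ∃ z : Fin n → K, z ≠ 0 ∧ MvPolynomial.aeval z f = 0 := by
  let y : Fin n → Q := fun j => π (MvPolynomial.X j) / π (MvPolynomial.X i)
  let F := IntermediateField.adjoin k (Set.range y)
  have : Algebra.EssFiniteType k F := by
    rw [IntermediateField.essFiniteType_iff]
    exact IntermediateField.fg_adjoin_of_finite (Set.finite_range y)
  let K := algebraicClosure k F
  have : FiniteDimensional k K := finiteDimensional_algebraicClosure k F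
  let y' : Fin n → F := fun j => ⟨y j, IntermediateField.subset_adjoin _ _ ⟨j, rfl⟩⟩
  obtain ⟨z, hz⟩ := exists_zero_of_algClosedIn hPAC (K := K) (F := F) (fun x hx =>
    ⟨⟨x, isIntegral_trans x hx⟩, rfl⟩) y'
  have hzi : z i = 1 := by
    have := hz (MvPolynomial.X i - 1) (by
      rw [map_sub, MvPolynomial.aeval_X, map_one, sub_eq_zero]
      exact Subtype.ext (div_self hi))
    simpa [sub_eq_zero] using this
  have hyf : MvPolynomial.aeval y f = 0 := by
    have h1 := aeval_mul_const_of_isHomogeneous hhom y (π (MvPolynomial.X i))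
    have h2 : MvPolynomial.aeval (fun j => y j * π (MvPolynomial.X i)) f = π f := by
      conv_rhs => rw [MvPolynomial.aeval_unique π]
      congr 2
      funext j
      exact div_mul_cancel₀ _ hi
    rw [h2, hπf] at h1
    exact (mul_eq_zero.mp h1.symm).resolve_right (pow_ne_zero _ hi)
  have hzf : MvPolynomial.aeval z f = 0 := by
    have := hz (MvPolynomial.map (algebraMap k K) f) (by
      rw [MvPolynomial.aeval_map_algebraMap]
      apply (algebraMap F Q).injective
      rw [map_zero, ← MvPolynomial.aeval_algebraMap_apply]
      exact hyf)
    rwa [MvPolynomial.eval_map, ← MvPolynomial.aeval_def] at this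
  exact ⟨K, inferInstance, inferInstance, inferInstance, inferInstance, inferInstance,
    fun c => (c : F).2, z, fun h => by simp [h] at hzi, hzf⟩

/-- The step of the Noetherian induction for a homogeneous prime that defines a nonempty projective
variety. -/
lemma exists_dvd_hilbertFn_of_isPrime {k : Type} [Field k] [PerfectField k]
    (hPAC : IsPseudoAlgebraicallyClosed k) {n d : ℕ} {f : MvPolynomial (Fin n) k}
    (hhom : f.IsHomogeneous d) {ℓ : ℤ}
    (hℓ : ∀ (L : Type) [Field L] [Algebra k L] [FiniteDimensional k L] (z : Fin n → L),
      z ≠ 0 → MvPolynomial.aeval z f = 0 → ℓ ∣ Module.finrank k L)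
    {p : Ideal (MvPolynomial (Fin n) k)} [hp : p.IsPrime]
    (hph : p.IsHomogeneous (MvPolynomial.homogeneousSubmodule (Fin n) k)) (hfp : f ∈ p)
    (ih : ∀ J > p, J.IsHomogeneous (MvPolynomial.homogeneousSubmodule (Fin n) k) →
      ∃ T, ∀ t ≥ T, ℓ ∣ hilbertFn (MvPolynomial.homogeneousSubmodule (Fin n) k) J t)
    {i : Fin n} (hi : MvPolynomial.X i ∉ p) :
    ∃ T, ∀ t ≥ T, ℓ ∣ hilbertFn (MvPolynomial.homogeneousSubmodule (Fin n) k) p t := by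
  obtain ⟨Q, _, _, π, hπ⟩ : ∃ (Q : Type) (_ : Field Q) (_ : Algebra k Q)
      (π : MvPolynomial (Fin n) k →ₐ[k] Q), ∀ x, π x = 0 ↔ x ∈ p := by
    refine ⟨FractionRing (MvPolynomial (Fin n) k ⧸ p), inferInstance, inferInstance,
      (IsScalarTower.toAlgHom k (MvPolynomial (Fin n) k ⧸ p) _).comp (Ideal.Quotient.mkₐ k p),
      fun x => ?_⟩
    change algebraMap (MvPolynomial (Fin n) k ⧸ p) (FractionRing (MvPolynomial (Fin n) k ⧸ p))
      (Ideal.Quotient.mk p x) = 0 ↔ _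
    rw [FaithfulSMul.algebraMap_eq_zero_iff, Ideal.Quotient.eq_zero_iff_mem]
  have hi' : π (MvPolynomial.X i) ≠ 0 := fun h => hi ((hπ _).mp h)
  obtain ⟨K, _, _, _, _, _, hK, z, hz, hzf⟩ := exists_residueField hPAC hhom π ((hπ f).mpr hfp) hi'
  -- The `a j / h` form a `k`-basis of `K`.
  let b := Module.finBasis k K
  obtain ⟨s, a, h, ha, hh, hah⟩ := exists_common_denominator π i hi'
    (fun j => algebraMap K Q (b j)) (fun j => hK (b j))
  have hlt : p < p ⊔ Ideal.span (Set.range a) := by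
    refine lt_of_le_of_ne le_sup_left fun heq => ?_
    have hpos : 0 < Module.finrank k K := Module.finrank_pos
    have hmem : a ⟨0, hpos⟩ ∈ p :=
      heq.ge (Ideal.mem_sup_right (Ideal.subset_span ⟨_, rfl⟩))
    have h0 := hah ⟨0, hpos⟩
    rw [(hπ _).mpr hmem] at h0
    refine mul_ne_zero ?_ hh h0.symm
    rw [Ne, FaithfulSMul.algebraMap_eq_zero_iff]
    exact b.ne_zero _
  obtain ⟨T, hT⟩ := ih _ hlt (hph.sup (Ideal.homogeneous_span _ _ (by
    rintro _ ⟨j, rfl⟩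
    exact ⟨s, ha j⟩)))
  refine ⟨T + s, fun t ht => ?_⟩
  obtain ⟨t, rfl⟩ := Nat.exists_eq_add_of_le' (show s ≤ t by omega)
  have hsub := (hℓ K z hz hzf).trans (finrank_dvd_hilbertFn_sub hph π hπ b h a ha hah t)
  exact (dvd_sub_left (hT _ (by omega))).mp hsub

/-- If `ℓ` divides the degree of every finite extension over which `f` has a nontrivial zero, then `ℓ`
divides the values in large degrees of the Hilbert function of every homogeneous ideal containing
`f`. -/
lemma exists_dvd_hilbertFn {k : Type} [Field k] [PerfectField k]
    (hPAC : IsPseudoAlgebraicallyClosed k) {n d : ℕ} {f : MvPolynomial (Fin n) k}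
    (hhom : f.IsHomogeneous d) {ℓ : ℤ}
    (hℓ : ∀ (L : Type) [Field L] [Algebra k L] [FiniteDimensional k L] (z : Fin n → L),
      z ≠ 0 → MvPolynomial.aeval z f = 0 → ℓ ∣ Module.finrank k L)
    (I : Ideal (MvPolynomial (Fin n) k))
    (hI : I.IsHomogeneous (MvPolynomial.homogeneousSubmodule (Fin n) k)) (hfI : f ∈ I) :
    ∃ T, ∀ t ≥ T, ℓ ∣ hilbertFn (MvPolynomial.homogeneousSubmodule (Fin n) k) I t := by
  induction I using WellFoundedGT.induction with
  | ind I ih =>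
  have ih' : ∀ J > I, J.IsHomogeneous (MvPolynomial.homogeneousSubmodule (Fin n) k) →
      ∃ T, ∀ t ≥ T, ℓ ∣ hilbertFn (MvPolynomial.homogeneousSubmodule (Fin n) k) J t :=
    fun J hJ hJh => ih J hJ hJh (hJ.le hfI)
  by_cases htop : I = ⊤
  · exact ⟨0, fun t _ => by rw [hilbertFn_eq_zero (by simp [htop])]; exact dvd_zero _⟩
  by_cases hprime : I.IsPrime
  · by_cases hX : ∀ i, MvPolynomial.X i ∈ I
    · refine ⟨1, fun t ht => ?_⟩
      rw [hilbertFn_eq_zero]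
      · exact dvd_zero _
      · -- every monomial of positive degree is divisible by a variable
        intro x hx
        rw [x.as_sum]
        refine Ideal.sum_mem _ fun m hm => ?_
        have hdeg : m.degree = t := by
          have := hx (MvPolynomial.mem_support_iff.mp hm)
          simpa [Finsupp.weight_apply, Finsupp.sum, Finsupp.degree_apply] using this
        obtain ⟨j, hj⟩ : ∃ j, m j ≠ 0 := by
          by_contra! hcon
          have : m = 0 := Finsupp.ext hcon
          rw [this, map_zero] at hdeg
          omega
        exact I.mem_of_dvd ((MvPolynomial.X_dvd_monomial).mpr (Or.inr hj)) (hX j)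
    · push Not at hX
      obtain ⟨i, hi⟩ := hX
      exact exists_dvd_hilbertFn_of_isPrime hPAC hhom hℓ hI hfI ih' hi
  · exact exists_dvd_hilbertFn_of_not_isPrime hI htop hprime ih'

lemma hilbertFn_bot (k : Type*) [Field k] (n t : ℕ) :
    hilbertFn (MvPolynomial.homogeneousSubmodule (Fin (n + 1)) k) ⊥ t = (t + n).choose n := by
  have : gradedPart (MvPolynomial.homogeneousSubmodule (Fin (n + 1)) k) ⊥ t = ⊥ := by
    rw [eq_bot_iff]
    exact fun x hx => hx.1
  rw [hilbertFn, this, finrank_bot, finrank_homogeneousSubmodule]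
  simp

lemma hilbertFn_span_singleton {k : Type*} [Field k] {n d : ℕ}
    {f : MvPolynomial (Fin (n + 1)) k} (hf : f ≠ 0) (hhom : f.IsHomogeneous d) (t : ℕ) :
    hilbertFn (MvPolynomial.homogeneousSubmodule (Fin (n + 1)) k) (Ideal.span {f}) (t + d) =
      (t + d + n).choose n - (t + n).choose n := by
  have h := hilbertFn_add (𝒜 := MvPolynomial.homogeneousSubmodule (Fin (n + 1)) k)
    (Ideal.IsHomogeneous.bot _) (a := f) (s := d) hhom hf t
  have hcolon : (⊥ : Ideal (MvPolynomial (Fin (n + 1)) k)).colon {f} = ⊥ := by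
    ext x
    simp [Submodule.mem_colon_singleton, hf]
  rw [hcolon, bot_sup_eq, hilbertFn_bot, hilbertFn_bot] at h
  linarith

theorem pac_perfect_hypersurface_index_one
    (k : Type) [Field k] [PerfectField k]
    (hPAC : IsPseudoAlgebraicallyClosed k)
    (n d : ℕ) (hn : 1 ≤ n) (hd1 : 1 ≤ d) (hdn : d ≤ n)
    (f : MvPolynomial (Fin (n + 1)) k) (hf : f ≠ 0)
    (hhom : f.IsHomogeneous d) :
    AddSubgroup.closure
      { m : ℤ | ∃ (L : Type) (_ : Field L) (_ : Algebra k L),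
          FiniteDimensional k L ∧
          (∃ z : Fin (n + 1) → L, z ≠ 0 ∧ MvPolynomial.aeval z f = 0) ∧
          m = (Module.finrank k L : ℤ) } = ⊤ := by
  obtain ⟨g, hg⟩ := Int.subgroup_cyclic (AddSubgroup.closure
      { m : ℤ | ∃ (L : Type) (_ : Field L) (_ : Algebra k L),
          FiniteDimensional k L ∧
          (∃ z : Fin (n + 1) → L, z ≠ 0 ∧ MvPolynomial.aeval z f = 0) ∧
          m = (Module.finrank k L : ℤ) })
  by_cases hg1 : g.natAbs = 1
  · rw [hg, ← AddSubgroup.zmultiples_eq_closure]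
    rcases Int.natAbs_eq_iff.mp hg1 with rfl | rfl
    · exact Int.zmultiples_one
    · simp
  exfalso
  obtain ⟨ℓ, hℓ, hℓg⟩ := Nat.exists_prime_and_dvd hg1
  have hdvd : ∀ (L : Type) [Field L] [Algebra k L] [FiniteDimensional k L] (z : Fin (n + 1) → L),
      z ≠ 0 → MvPolynomial.aeval z f = 0 → (ℓ : ℤ) ∣ Module.finrank k L := by
    intro L _ _ _ z hz hzf
    have hmem := AddSubgroup.subset_closure (k := { m : ℤ | ∃ (L : Type) (_ : Field L)
      (_ : Algebra k L), FiniteDimensional k L ∧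
          (∃ z : Fin (n + 1) → L, z ≠ 0 ∧ MvPolynomial.aeval z f = 0) ∧
          m = (Module.finrank k L : ℤ) }) ⟨L, _, _, inferInstance, ⟨z, hz, hzf⟩, rfl⟩
    rw [hg, ← AddSubgroup.zmultiples_eq_closure] at hmem
    exact (Int.natCast_dvd.mpr hℓg).trans (Int.mem_zmultiples_iff.mp hmem)
  obtain ⟨T, hT⟩ := exists_dvd_hilbertFn hPAC hhom hdvd (Ideal.span {f})
    (Ideal.homogeneous_span _ _ (by rintro _ rfl; exact ⟨d, hhom⟩))
    (Ideal.mem_span_singleton_self f)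
  -- Evaluate in the degree `ℓ ^ N` for `N` large, where both binomial coefficients are known mod `ℓ`.
  let N := T + n + d
  have hN : N < ℓ ^ N := Nat.lt_pow_self hℓ.one_lt
  have h := hT (ℓ ^ N) (by omega)
  obtain ⟨t, ht⟩ := Nat.exists_eq_add_of_le' (show d ≤ ℓ ^ N by omega)
  rw [ht, hilbertFn_span_singleton hf hhom, ← ht,
    show t + n = ℓ ^ N + (n - d) by omega] at h
  have h1 := choose_prime_pow_add_modEq hℓ (N := N) (r := n) (n := n) (show n < ℓ ^ N by omega)
  have h2 := choose_prime_pow_add_modEq hℓ (N := N) (r := n - d) (n := n) (show n < ℓ ^ N by omega)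
  rw [Nat.choose_self] at h1
  rw [Nat.choose_eq_zero_of_lt (show n - d < n by omega)] at h2
  -- the two binomial coefficients agree mod `ℓ`, yet are congruent to `1` and `0`
  have h3 : 0 ≡ 1 [MOD ℓ] := (h2.symm.trans (Nat.modEq_iff_dvd.mpr h)).trans h1
  exact hℓ.one_lt.ne' (Nat.dvd_one.mp ((Nat.modEq_zero_iff_dvd).mp h3.symm))

end Main
end
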